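/- Let F be the bowtie graph (two triangles joined by an edge: vertex set {1,...,6}, edges {1,2},{1,3},{2,3},{4,5},{4,6},{5,6},{1,4}). For every function N : ℕ → ℕ with n^{86/61} = o(N(n)) and N(n) ≤ n(n−1)/2 for all n, and for every sequence of online Painter strategies with 2 colors (one for each board size n), the probability that the board G_{N(n)} of the online F-avoidance game with 2 colors on n vertices contains a monochromatic copy of F tends to 1 as n → ∞. -/

import Mathlib

open SimpleGraph Filter Asymptotics
open scoped Classical

/-- A history of the game: the sequence of edges presented so far, together with
the colors (elements of `Fin r`, representing the colors `1,…,r`) they received. -/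
abbrev EdgeHistory (V : Type) (r : ℕ) := List (Sym2 V × Fin r)

/-- A Painter strategy on vertex type `V` with `r` colors: a function assigning a color
to every pair (history, new edge). -/
abbrev PainterStrategy (V : Type) (r : ℕ) := EdgeHistory V r → Sym2 V → Fin r

/-- Auxiliary function: run a Painter strategy on a list of presented edges,
extending the given history. -/
def runPainterAux {V : Type} {r : ℕ} (π : PainterStrategy V r) :
    EdgeHistory V r → List (Sym2 V) → EdgeHistory V r
  | h, [] => h
  | h, e :: es => runPainterAux π (h ++ [(e, π h e)]) es

/-- The colored history obtained by coloring the edges of `l` successively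
according to the Painter strategy `π`. -/
def runPainter {V : Type} {r : ℕ} (π : PainterStrategy V r) (l : List (Sym2 V)) :
    EdgeHistory V r :=
  runPainterAux π [] l

/-- `G` contains a copy of `F`, i.e. a subgraph isomorphic to `F`. -/
def IsCopy {α β : Type} (F : SimpleGraph α) (G : SimpleGraph β) : Prop :=
  ∃ f : α ↪ β, ∀ u v : α, F.Adj u v → G.Adj (f u) (f v)

/-- The graph formed by the edges of color `c` in the history `h`. -/
def colorGraph {V : Type} {r : ℕ} (h : EdgeHistory V r) (c : Fin r) : SimpleGraph V :=
  SimpleGraph.fromEdgeSet {e | (e, c) ∈ h}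

/-- The history `h` contains a monochromatic copy of `F`. -/
def HasMonoCopy {α V : Type} {r : ℕ} (F : SimpleGraph α) (h : EdgeHistory V r) : Prop :=
  ∃ c : Fin r, IsCopy F (colorGraph h c)

/-- The number of edges of `G` lying entirely within the vertex set `S`. -/
noncomputable def edgesWithin {V : Type} (G : SimpleGraph V) (S : Set V) : ℕ :=
  (G.edgeSet ∩ {e | ∀ v ∈ e, v ∈ S}).ncard

/-- `m(G) ≤ d`: every subgraph `H` of `G` with at least one vertex satisfies `e_H ≤ d · v_H`. -/
def DensityLE {V : Type} (G : SimpleGraph V) (d : ℝ) : Prop :=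
  ∀ S : Finset V, S.Nonempty → (edgesWithin G (↑S : Set V) : ℝ) ≤ d * (S.card : ℝ)

/-- `G` contains no cycle and every connected component of `G` has at most `k` edges
(equivalently, `G` is acyclic and contains no connected subgraph with more than `k` edges). -/
def TreeSizeLE {V : Type} (G : SimpleGraph V) (k : ℕ) : Prop :=
  G.IsAcyclic ∧ ∀ S : Set V, (G.induce S).Connected → edgesWithin G S ≤ k

/-- A legal sequence of moves for Builder: distinct non-loop edges. -/
def ValidEdgeSeq {V : Type} (l : List (Sym2 V)) : Prop :=
  l.Nodup ∧ ∀ e ∈ l, ¬ e.IsDiag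

/-- The (uncolored) board formed by a list of edges. -/
def boardOf {V : Type} (l : List (Sym2 V)) : SimpleGraph V :=
  SimpleGraph.fromEdgeSet {e | e ∈ l}

/-- Builder has a winning strategy in the deterministic `F`-avoidance game with `r` colors
and density restriction `d`. -/
def BuilderWinsDensity {α : Type} (F : SimpleGraph α) (r : ℕ) (d : ℝ) : Prop :=
  ∃ a : ℕ, ∀ π : PainterStrategy (Fin a) r, ∃ l : List (Sym2 (Fin a)),
    ValidEdgeSeq l ∧ (∀ i : ℕ, DensityLE (boardOf (l.take i)) d) ∧
    HasMonoCopy F (runPainter π l)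

/-- Builder has a winning strategy in the deterministic `F`-avoidance game with `r` colors
and tree size restriction `k`. -/
def BuilderWinsTree {α : Type} (F : SimpleGraph α) (r k : ℕ) : Prop :=
  ∃ a : ℕ, ∀ π : PainterStrategy (Fin a) r, ∃ l : List (Sym2 (Fin a)),
    ValidEdgeSeq l ∧ (∀ i : ℕ, TreeSizeLE (boardOf (l.take i)) k) ∧
    HasMonoCopy F (runPainter π l)

/-- The Painter strategy `π` on `a` vertices never creates a monochromatic copy of `F`
against any Builder play obeying the tree size restriction `k`. -/
def PainterAvoidsTree {α : Type} (F : SimpleGraph α) (r k a : ℕ)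
    (π : PainterStrategy (Fin a) r) : Prop :=
  ∀ l : List (Sym2 (Fin a)), ValidEdgeSeq l →
    (∀ i : ℕ, TreeSizeLE (boardOf (l.take i)) k) →
    ¬ HasMonoCopy F (runPainter π l)

/-- Painter has a winning strategy in the deterministic `F`-avoidance game with `r` colors
and tree size restriction `k`. -/
def PainterWinsTree {α : Type} (F : SimpleGraph α) (r k : ℕ) : Prop :=
  ∀ a : ℕ, ∃ π : PainterStrategy (Fin a) r, PainterAvoidsTree F r k a π

/-- A sequence of `N` distinct non-loop edges on `n` vertices. -/
def ValidSeqFun {n N : ℕ} (f : Fin N → Sym2 (Fin n)) : Prop :=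
  Function.Injective f ∧ ∀ i, ¬ (f i).IsDiag

/-- The probability (with respect to the uniformly random order in which the `N` distinct
edges of the random process on `n` vertices appear) of the event `P`. -/
noncomputable def onlineProb (n N : ℕ) (P : (Fin N → Sym2 (Fin n)) → Prop) : ℝ :=
  (Set.ncard {f : Fin N → Sym2 (Fin n) | ValidSeqFun f ∧ P f} : ℝ) /
  (Set.ncard {f : Fin N → Sym2 (Fin n) | ValidSeqFun f} : ℝ)

/-- Event: playing the online strategy `π` on the random edge sequence `f` produces
a monochromatic copy of `F`. -/
def OnlineMonoCopy {α : Type} (F : SimpleGraph α) {r n N : ℕ}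
    (π : PainterStrategy (Fin n) r) (f : Fin N → Sym2 (Fin n)) : Prop :=
  HasMonoCopy F (runPainter π (List.ofFn f))

/-- The bowtie graph: two triangles `{0,1,2}` and `{3,4,5}` joined by the edge `{0,3}`
(vertices `1,…,6` of the informal statement correspond to `0,…,5` here). -/
def bowtie : SimpleGraph (Fin 6) :=
  SimpleGraph.fromEdgeSet
    {s(0, 1), s(0, 2), s(1, 2), s(3, 4), s(3, 5), s(4, 5), s(0, 3)}

namespace Bow

abbrev St (V : Type) := Sym2 V → Option (Fin 2)

def WinsN {V : Type} (P : St V → Prop) : ℕ → St V → Prop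
  | 0, s => P s
  | n + 1, s => ∃ e : Sym2 V, s e = none ∧ ¬ e.IsDiag ∧
      ∀ c : Fin 2, WinsN P n (Function.update s e (some c))

lemma WinsN.bind {V : Type} {P Q : St V → Prop} {m : ℕ}
    (h : ∀ s, P s → WinsN Q m s) : ∀ {n : ℕ} {s : St V}, WinsN P n s → WinsN Q (n + m) s
  | 0, s, hs => by
      rw [Nat.zero_add]; exact h s hs
  | n + 1, s, ⟨e, h1, h2, h3⟩ => by
      rw [Nat.succ_add]
      exact ⟨e, h1, h2, fun c => WinsN.bind h (h3 c)⟩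

lemma WinsN.mono {V : Type} {P Q : St V → Prop} (h : ∀ s, P s → Q s) {n : ℕ} {s : St V}
    (hs : WinsN P n s) : WinsN Q n s :=
  WinsN.bind (m := 0) (fun s hs => h s hs) hs

lemma wins_embed {V W : Type} (P : St V → Prop) (ι : V ↪ W) : ∀ (n : ℕ) (S : St W),
    WinsN P n (S ∘ Sym2.map ι) →
    WinsN (fun S' => P (S' ∘ Sym2.map ι) ∧ ∀ e, e ∉ Set.range (Sym2.map ι) → S' e = S e) n S
  | 0, S, h => ⟨h, fun _ _ => rfl⟩
  | n + 1, S, ⟨e, h1, h2, h3⟩ => by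
      refine ⟨Sym2.map ι e, h1, ?_, fun c => ?_⟩
      · induction e with | _ a b =>
        simpa using h2
      · have key : (Function.update S (Sym2.map ι e) (some c)) ∘ Sym2.map ι =
            Function.update (S ∘ Sym2.map ι) e (some c) := by
          funext x
          by_cases hx : x = e
          · subst hx; simp
          · have : Sym2.map ι x ≠ Sym2.map ι e := fun h => hx (Sym2.map.injective ι.injective h)
            simp [Function.update_of_ne, hx, this]
        have := wins_embed P ι n (Function.update S (Sym2.map ι e) (some c)) (by
          rw [key]; exact h3 c)
        refine this.mono ?_
        rintro s ⟨hp, hs⟩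
        refine ⟨hp, fun x hx => ?_⟩
        rw [hs x hx, Function.update_of_ne]
        rintro rfl
        exact hx ⟨e, rfl⟩

def slice {h : ℕ} {V : Type} (S : St (Fin h × V)) (j : Fin h) : St V :=
  fun e => S (Sym2.map (fun v => (j, v)) e)

lemma wins_copies {V : Type} (P : St V → Prop) (n h : ℕ) (hW : WinsN P n (fun _ => none)) :
    ∀ k : ℕ, k ≤ h → WinsN (fun S : St (Fin h × V) =>
      (∀ j : Fin h, j.1 < k → P (slice S j)) ∧ (∀ j : Fin h, k ≤ j.1 → slice S j = fun _ => none) ∧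
      ∀ e, (∀ j : Fin h, e ∉ Set.range (Sym2.map (fun v : V => (j, v)))) → S e = none)
      (k * n) (fun _ => none)
  | 0, _ => by
      rw [Nat.zero_mul]
      exact ⟨fun j hj => by omega, fun j _ => rfl, fun _ _ => rfl⟩
  | k + 1, hk => by
      have ih := wins_copies P n h hW k (by omega)
      rw [Nat.succ_mul]
      refine WinsN.bind ?_ ih
      rintro S ⟨h1, h2, h3⟩
      let j0 : Fin h := ⟨k, hk⟩
      let ι : V ↪ Fin h × V := ⟨fun v => (j0, v), fun a b hab => by simpa using hab⟩
      have := wins_embed P ι n S (by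
        have : S ∘ Sym2.map ι = fun _ => none := h2 j0 le_rfl
        rw [this]; exact hW)
      refine this.mono ?_
      rintro S' ⟨hp, hs⟩
      have hne : ∀ j : Fin h, j ≠ j0 → slice S' j = slice S j := by
        intro j hj
        funext e
        refine hs _ ?_
        rintro ⟨x, hx⟩
        induction e with | _ a b =>
        induction x with | _ c d =>
        simp [ι] at hx
        rcases hx with hx | hx
        · exact hj (congrArg Prod.fst hx.1).symm
        · exact hj (congrArg Prod.fst hx.1).symm
      refine ⟨?_, ?_, ?_⟩
      · intro j hj
        by_cases hjj : j = j0
        · subst hjj; exact hp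
        · rw [hne j hjj]; apply h1
          have : j.1 ≠ k := fun h => hjj (Fin.ext h)
          omega
      · intro j hj
        rw [hne j]
        · exact h2 j (by omega)
        · rintro rfl; simp [j0] at hj
      · intro e he
        rw [hs e (he j0)]
        exact h3 e he

lemma wins_present {V : Type} (l : Finset (Sym2 V)) : ∀ (s : St V),
    (∀ e ∈ l, s e = none) → (∀ e ∈ l, ¬ e.IsDiag) →
    WinsN (fun s' => (∀ e ∈ l, s' e ≠ none) ∧ ∀ e, e ∉ l → s' e = s e) l.card s := by
  induction l using Finset.induction_on with
  | empty => 
      intro s _ _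
      exact ⟨by simp, fun _ _ => rfl⟩
  | insert a l ha ih =>
      intro s h1 h2
      rw [Finset.card_insert_of_notMem ha]
      refine ⟨a, h1 a (by simp), h2 a (by simp), fun c => ?_⟩
      refine (ih (Function.update s a (some c)) ?_ ?_).mono ?_
      · intro e he
        rw [Function.update_of_ne]
        · exact h1 e (by simp [he])
        · rintro rfl; exact ha he
      · intro e he; exact h2 e (by simp [he])
      · rintro s' ⟨q1, q2⟩
        refine ⟨?_, ?_⟩
        · intro e he
          rcases Finset.mem_insert.1 he with rfl | he
          · rw [q2 _ ha]; simp
          · exact q1 e he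
        · intro e he
          simp only [Finset.mem_insert, not_or] at he
          rw [q2 e he.2, Function.update_of_ne he.1]

/-- edges inside `U` -/
noncomputable def ec {V : Type} (s : St V) (U : Finset V) : ℕ :=
  (U.sym2.filter (fun e => s e ≠ none)).card

lemma prod_step {V : Type} (P : St V → Prop) (n : ℕ) (hW : WinsN P n (fun _ => none))
    (h k : ℕ) (Q : St (Fin h × V) → Prop)
    (step : ∀ S : St (Fin h × V), (∀ j, P (slice S j)) →
      ∃ (x : Fin h → V) (H : Finset (Sym2 (Fin h))), H.card = k ∧ (∀ e ∈ H, ¬ e.IsDiag) ∧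
        ∀ S' : St (Fin h × V), (∀ j, slice S' j = slice S j) →
          (∀ e ∈ H, S' (Sym2.map (fun j => (j, x j)) e) ≠ none) →
          (∀ e, (∀ j : Fin h, e ∉ Set.range (Sym2.map (fun v : V => (j, v)))) →
            e ∉ H.image (Sym2.map (fun j => (j, x j))) → S' e = none) → Q S') :
    WinsN Q (h * n + k) (fun _ => none) := by
  refine WinsN.bind ?_ (wins_copies P n h hW h le_rfl)
  rintro S ⟨h1, -, h3⟩
  obtain ⟨x, H, hc, hd, hq⟩ := step S (fun j => h1 j j.2)
  have hinj : Function.Injective (Sym2.map (fun j : Fin h => (j, x j))) :=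
    Sym2.map.injective (fun a b hab => by simpa using congrArg Prod.fst hab)
  have hcross : ∀ e ∈ H, ∀ j : Fin h, Sym2.map (fun j => (j, x j)) e ∉
      Set.range (Sym2.map (fun v : V => (j, v))) := by
    intro e he j
    rintro ⟨y, hy⟩
    have hd' := hd e he
    induction e with | _ a b =>
    induction y with | _ c d =>
    simp at hy hd'
    rcases hy with hy | hy
    · exact hd' (hy.1.1.symm.trans hy.2.1)
    · exact hd' (hy.2.1.symm.trans hy.1.1)
  have := wins_present (H.image (Sym2.map (fun j => (j, x j)))) S (by
      intro e he
      obtain ⟨y, hy, rfl⟩ := Finset.mem_image.1 he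
      exact h3 _ (hcross y hy)) (by
      intro e he
      obtain ⟨y, hy, rfl⟩ := Finset.mem_image.1 he
      have hd' := hd y hy
      induction y with | _ a b =>
      simp at hd' ⊢
      intro h; exact absurd h hd')
  rw [Finset.card_image_of_injective _ hinj, hc] at this
  refine this.mono ?_
  rintro S' ⟨q1, q2⟩
  refine hq S' ?_ ?_ ?_
  · intro j
    funext e
    refine q2 _ ?_
    intro hm
    obtain ⟨y, hy, hyy⟩ := Finset.mem_image.1 hm
    exact hcross y hy j ⟨e, hyy.symm⟩
  · intro e he
    exact q1 _ (Finset.mem_image_of_mem _ he)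
  · intro e he1 he2
    rw [q2 e he2]; exact h3 e he1

lemma prod_dens {V : Type} {h : ℕ} (A B C C' : ℕ) (S : St (Fin h × V)) (x : Fin h → V)
    (H : Finset (Sym2 (Fin h)))
    (hs : ∀ j, ∀ U : Finset V, U.Nonempty → A * ec (slice S j) U + C ≤ B * U.card)
    (hH : ∀ J : Finset (Fin h), J.Nonempty → A * (H ∩ J.sym2).card + C' ≤ C * J.card)
    (hS : ∀ e, (∀ j : Fin h, e ∉ Set.range (Sym2.map (fun v : V => (j, v)))) →
            e ∉ H.image (Sym2.map (fun j => (j, x j))) → S e = none)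
    (U : Finset (Fin h × V)) (hU : U.Nonempty) : A * ec S U + C' ≤ B * U.card := by
  let Uj : Fin h → Finset V := fun j => (U.filter (fun p => p.1 = j)).image Prod.snd
  have hUj : ∀ j v, v ∈ Uj j ↔ (j, v) ∈ U := by
    intro j v; simp [Uj]
  let J : Finset (Fin h) := U.image Prod.fst
  have hJ : J.Nonempty := hU.image _
  have hJne : ∀ j ∈ J, (Uj j).Nonempty := by
    intro j hj
    obtain ⟨⟨a, v⟩, hp, rfl⟩ := Finset.mem_image.1 hj
    exact ⟨v, (hUj _ _).2 hp⟩
  have hcard : U.card = ∑ j ∈ J, (Uj j).card := by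
    rw [Finset.card_eq_sum_card_image Prod.fst U]
    refine Finset.sum_congr rfl fun j _ => ?_
    refine (Finset.card_image_of_injOn ?_).symm
    rintro ⟨a, b⟩ ha ⟨c, d⟩ hc hbd
    simp at ha hc hbd
    simp [ha.2, hc.2, hbd]
  have hec : ec S U ≤ ∑ j ∈ J, ec (slice S j) (Uj j) + (H ∩ J.sym2).card := by
    have hsub : U.sym2.filter (fun e => S e ≠ none) ⊆
        (J.biUnion fun j => ((Uj j).sym2.filter (fun e => slice S j e ≠ none)).image
          (Sym2.map (fun v => (j, v)))) ∪ (H ∩ J.sym2).image (Sym2.map (fun j => (j, x j))) := by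
      intro e he
      rw [Finset.mem_filter, Finset.mem_sym2_iff] at he
      obtain ⟨he1, he2⟩ := he
      by_cases hr : ∃ j : Fin h, e ∈ Set.range (Sym2.map (fun v : V => (j, v)))
      · obtain ⟨j, y, rfl⟩ := hr
        refine Finset.mem_union_left _ (Finset.mem_biUnion.2 ⟨j, ?_, ?_⟩)
        · induction y with | _ a b =>
          exact Finset.mem_image.2 ⟨(j, a), he1 _ (by simp), rfl⟩
        · refine Finset.mem_image.2 ⟨y, ?_, rfl⟩
          rw [Finset.mem_filter, Finset.mem_sym2_iff]
          refine ⟨fun a ha => (hUj _ _).2 (he1 _ (Sym2.mem_map.2 ⟨a, ha, rfl⟩)), he2⟩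
      · refine Finset.mem_union_right _ ?_
        by_contra hcon
        refine he2 (hS e (fun j hj => hr ⟨j, hj⟩) ?_)
        intro hm
        obtain ⟨y, hy, rfl⟩ := Finset.mem_image.1 hm
        refine hcon (Finset.mem_image_of_mem _ (Finset.mem_inter.2 ⟨hy, ?_⟩))
        rw [Finset.mem_sym2_iff]
        intro a ha
        exact Finset.mem_image.2 ⟨(a, x a), he1 _ (Sym2.mem_map.2 ⟨a, ha, rfl⟩), rfl⟩
    refine (Finset.card_le_card hsub).trans ((Finset.card_union_le _ _).trans ?_)
    refine add_le_add (Finset.card_biUnion_le.trans (Finset.sum_le_sum fun j _ => ?_)) ?_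
    · exact Finset.card_image_le
    · exact Finset.card_image_le
  have h1 : ∑ j ∈ J, (A * ec (slice S j) (Uj j) + C) ≤ ∑ j ∈ J, B * (Uj j).card :=
    Finset.sum_le_sum fun j hj => hs j _ (hJne j hj)
  rw [Finset.sum_add_distrib, ← Finset.mul_sum, ← Finset.mul_sum, ← hcard, Finset.sum_const,
    smul_eq_mul] at h1
  have h2 := hH J hJ
  have h3 := Nat.mul_le_mul_left A hec
  rw [mul_add] at h3
  rw [mul_comm C] at h2
  omega

end Bow

namespace Bow

def par (k : ℕ) : ℕ :=
  if k = 1 ∨ k = 3 ∨ k = 6 ∨ k = 8 ∨ k = 11 ∨ k = 13 then 0 else k - 1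

lemma par_lt {k : ℕ} (hk : 1 ≤ k) : par k < k := by
  unfold par; split_ifs <;> omega

def parF (k : Fin 16) : Fin 16 := ⟨par k.1, by
  rcases Nat.eq_zero_or_pos k.1 with h | h
  · rw [h]; decide
  · exact (par_lt h).trans k.2⟩

/-- edges of the spider -/
def TE : Finset (Sym2 (Fin 16)) :=
  ((Finset.univ : Finset (Fin 16)).erase 0).image (fun k => s(k, parF k))

lemma parF_lt {k : Fin 16} (hk : k ≠ 0) : parF k < k := by
  have : 1 ≤ k.1 := by
    rcases Nat.eq_zero_or_pos k.1 with h | h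
    · exact absurd (Fin.ext h) hk
    · exact h
  exact par_lt this

lemma TE_nd : ∀ e ∈ TE, ¬ e.IsDiag := by
  intro e he
  obtain ⟨k, hk, rfl⟩ := Finset.mem_image.1 he
  have := parF_lt (Finset.ne_of_mem_erase hk)
  simp only [Sym2.mk_isDiag_iff]
  exact this.ne'

lemma TE_inj : Set.InjOn (fun k => s(k, parF k)) ((Finset.univ : Finset (Fin 16)).erase 0 : Finset (Fin 16)) := by
  intro a ha b hb hab
  have h1 := parF_lt (Finset.ne_of_mem_erase ha)
  have h2 := parF_lt (Finset.ne_of_mem_erase hb)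
  simp only [Sym2.eq_iff] at hab
  rcases hab with h | h
  · exact h.1
  · rw [h.2] at h1
    rw [← h.1] at h2
    exact absurd h1 (lt_asymm h2)

lemma TE_card : TE.card = 15 := by
  unfold TE
  rw [Finset.card_image_of_injOn TE_inj]
  simp

lemma TE_forest (J : Finset (Fin 16)) (hJ : J.Nonempty) : 1 * (TE ∩ J.sym2).card + 1 ≤ 1 * J.card := by
  have hsub : TE ∩ J.sym2 ⊆ (J.erase (J.min' hJ)).image (fun k => s(k, parF k)) := by
    intro e he
    rw [Finset.mem_inter, Finset.mem_sym2_iff] at he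
    obtain ⟨he1, he2⟩ := he
    obtain ⟨k, hk, rfl⟩ := Finset.mem_image.1 he1
    have h1 := parF_lt (Finset.ne_of_mem_erase hk)
    refine Finset.mem_image_of_mem _ (Finset.mem_erase.2 ⟨?_, he2 _ (by simp)⟩)
    intro hh
    have := J.min'_le _ (he2 (parF k) (by simp))
    rw [← hh] at this
    exact absurd h1 (not_lt.2 this)
  have := (Finset.card_le_card hsub).trans Finset.card_image_le
  rw [Finset.card_erase_of_mem (J.min'_mem hJ)] at this
  have := hJ.card_pos
  omega

def Sparse {V : Type} (s : St V) : Prop :=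
  ∀ U : Finset V, U.Nonempty → 1 * ec s U + 1 ≤ 1 * U.card

def RedT {V : Type} (i : ℕ) (c : Fin 2) (s : St V) : Prop :=
  ∃ κ : ℕ → V, Set.InjOn κ (Set.Iic i) ∧ ∀ k, 1 ≤ k → k ≤ i → s s(κ k, κ (par k)) = some c

def PT {V : Type} (i : ℕ) (s : St V) : Prop :=
  Sparse s ∧ (RedT i 0 s ∨ ∃ c, RedT 15 c s)

lemma RedT.lift {V : Type} {h i : ℕ} {c : Fin 2} (S : St (Fin h × V)) (j : Fin h)
    (hr : RedT i c (slice S j)) : RedT i c S := by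
  obtain ⟨κ, h1, h2⟩ := hr
  refine ⟨fun k => (j, κ k), ?_, ?_⟩
  · intro a ha b hb hab
    exact h1 ha hb (congrArg Prod.snd hab)
  · intro k hk hk'
    exact h2 k hk hk'

lemma fin2_eq {a : Option (Fin 2)} (h : a ≠ none) {c : Fin 2} (h' : a ≠ some c) :
    a = some (1 - c) := by
  revert a c; decide

lemma tree_step (i : ℕ) (hi : i + 1 ≤ 15) (V : Type) [Fintype V] (n : ℕ)
    (hW : WinsN (PT (V := V) i) n (fun _ => none)) :
    WinsN (PT (V := Fin 16 × V) (i + 1)) (16 * n + 15) (fun _ => none) := by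
  refine prod_step _ n hW 16 15 _ ?_
  intro S hS
  have hroot : ∀ j : Fin 16, ∃ x : V, RedT i 0 (slice S j) → ∃ κ : ℕ → V, Set.InjOn κ (Set.Iic i) ∧
      (∀ k, 1 ≤ k → k ≤ i → slice S j s(κ k, κ (par k)) = some 0) ∧ x = κ (par (i + 1)) := by
    intro j
    by_cases hr : RedT i 0 (slice S j)
    · obtain ⟨κ, h1, h2⟩ := hr
      exact ⟨κ (par (i + 1)), fun _ => ⟨κ, h1, h2, rfl⟩⟩
    · rcases (hS j).2 with h | ⟨c, κ, -⟩
      · exact absurd h hr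
      · exact ⟨κ 0, fun h => absurd h hr⟩
  choose x hx using hroot
  refine ⟨x, TE, TE_card, TE_nd, ?_⟩
  intro S' h1 h2 h3
  refine ⟨?_, ?_⟩
  · exact prod_dens 1 1 1 1 S' x TE (fun j U hU => by rw [h1]; exact (hS j).1 U hU) TE_forest h3
  by_cases hR : ∃ j c, RedT 15 c (slice S j)
  · obtain ⟨j, c, hR⟩ := hR
    rw [← h1] at hR
    exact Or.inr ⟨c, hR.lift⟩
  have hQ : ∀ j, RedT i 0 (slice S j) := by
    intro j
    rcases (hS j).2 with h | ⟨c, h⟩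
    · exact h
    · exact absurd ⟨j, c, h⟩ hR
  by_cases hb : ∀ e ∈ TE, S' (Sym2.map (fun j => (j, x j)) e) ≠ some 0
  · refine Or.inr ⟨1, fun k => (Fin.ofNat 16 k, x (Fin.ofNat 16 k)), ?_, ?_⟩
    · intro a ha b hb hab
      have := congrArg (fun p => p.1.1) hab
      simp only [Fin.ofNat] at this
      simp only [Set.mem_Iic] at ha hb
      rwa [Nat.mod_eq_of_lt (by omega), Nat.mod_eq_of_lt (by omega)] at this
    · intro k hk hk'
      have hpk := par_lt hk
      have hpe : Fin.ofNat 16 (par k) = parF (Fin.ofNat 16 k) := by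
        ext
        simp only [Fin.ofNat, parF]
        rw [Nat.mod_eq_of_lt (by omega), Nat.mod_eq_of_lt (a := k) (by omega)]
      have hm : s(Fin.ofNat 16 k, parF (Fin.ofNat 16 k)) ∈ TE := by
        refine Finset.mem_image_of_mem (fun k => s(k, parF k)) (Finset.mem_erase.2 ⟨?_, Finset.mem_univ _⟩)
        intro h
        have := congrArg Fin.val h
        simp only [Fin.ofNat, Fin.val_zero] at this
        omega
      have := fin2_eq (h2 _ hm) (hb _ hm)
      beta_reduce
      rw [hpe]
      exact this
  · left
    push Not at hb
    obtain ⟨e, he, hec⟩ := hb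
    obtain ⟨k, hk, rfl⟩ := Finset.mem_image.1 he
    have hklt := parF_lt (Finset.ne_of_mem_erase hk)
    obtain ⟨κ, g1, g2, g3⟩ := hx k (hQ k)
    have hpi : par (i + 1) ≤ i := Nat.lt_succ_iff.1 (par_lt (by omega))
    refine ⟨fun m => if m = i + 1 then (parF k, x (parF k)) else (k, κ m), ?_, ?_⟩
    · intro a ha b hb hab
      simp only [Set.mem_Iic] at ha hb
      by_cases ha' : a = i + 1 <;> by_cases hb' : b = i + 1
      · rw [ha', hb']
      · simp only [ha', hb', if_true, if_false] at hab
        exact absurd (congrArg Prod.fst hab) hklt.ne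
      · simp only [ha', hb', if_true, if_false] at hab
        exact absurd (congrArg Prod.fst hab) hklt.ne'
      · simp only [ha', hb', if_false] at hab
        exact g1 (by simp; omega) (by simp; omega) (congrArg Prod.snd hab)
    · intro m hm hm'
      have hpm := par_lt hm
      by_cases hmi : m = i + 1
      · subst hmi
        have : par (i + 1) ≠ i + 1 := by omega
        simp only [this, if_true, if_false]
        rw [← g3, Sym2.eq_swap]
        exact hec
      · have hp' : par m ≠ i + 1 := by omega
        simp only [hmi, hp', if_false]
        have := g2 m hm (by omega)
        rw [← h1] at this
        exact this

lemma tree_all : ∀ i : ℕ, i ≤ 15 → ∃ (V : Type) (_ : Fintype V) (n : ℕ),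
    WinsN (PT (V := V) i) n (fun _ => none)
  | 0, _ => by
      refine ⟨Unit, inferInstance, 0, ?_, Or.inl ⟨fun _ => (), ?_, ?_⟩⟩
      · intro U hU
        have h0 : ec (V := Unit) (fun _ => none) U = 0 := by simp [ec]
        rw [h0]
        have := hU.card_pos
        omega
      · intro a ha b hb _
        simp only [Set.mem_Iic] at ha hb
        omega
      · intro k hk hk'; omega
  | i + 1, hi => by
      obtain ⟨V, hV, n, h⟩ := tree_all i (by omega)
      exact ⟨Fin 16 × V, inferInstance, _, tree_step i hi V n h⟩

lemma forced_tree : ∃ (V : Type) (_ : Fintype V) (n : ℕ),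
    WinsN (fun s : St V => Sparse s ∧ ∃ c, RedT 15 c s) n (fun _ => none) := by
  obtain ⟨V, hV, n, h⟩ := tree_all 15 le_rfl
  refine ⟨V, hV, n, h.mono ?_⟩
  rintro s ⟨h1, h2 | h2⟩
  · exact ⟨h1, 0, h2⟩
  · exact ⟨h1, h2⟩

end Bow

namespace Bow

abbrev CL := List (Fin 16 × Fin 16 × ℕ)

def edg (l : CL) : Finset (Sym2 (Fin 16)) := (l.map (fun p => s(p.1, p.2.1))).toFinset

def load (l : CL) (v : Fin 16) : ℕ :=
  (l.map (fun p => (if p.1 = v then p.2.2 else 0) + (if p.2.1 = v then 2 - p.2.2 else 0))).sum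

def adj (l : CL) (a b : Fin 16) : Bool :=
  l.any (fun p => (p.1 == a && p.2.1 == b) || (p.1 == b && p.2.1 == a))

lemma mem_edg (l : CL) (a b : Fin 16) : s(a, b) ∈ edg l ↔ adj l a b = true := by
  simp only [edg, adj, List.mem_toFinset, List.mem_map, List.any_eq_true, Sym2.eq_iff,
    Bool.or_eq_true, Bool.and_eq_true, beq_iff_eq]

lemma half_bound (R : Finset (Fin 16)) : ∀ (l : CL), (∀ p ∈ l, p.2.2 ≤ 2) →
    2 * (edg l ∩ R.sym2).card ≤ ∑ v ∈ R, load l v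
  | [], _ => by simp [edg, load]
  | p :: l, h => by
      have ih := half_bound R l (fun q hq => h q (List.mem_cons_of_mem _ hq))
      have hp := h p (by simp)
      have e1 : ∑ v ∈ R, load (p :: l) v = (if p.1 ∈ R then p.2.2 else 0) +
          (if p.2.1 ∈ R then 2 - p.2.2 else 0) + ∑ v ∈ R, load l v := by
        simp only [load, List.map_cons, List.sum_cons, Finset.sum_add_distrib, Finset.sum_ite_eq]
      have e2 : edg (p :: l) ∩ R.sym2 ⊆ (if p.1 ∈ R ∧ p.2.1 ∈ R then {s(p.1, p.2.1)} else ∅) ∪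
          (edg l ∩ R.sym2) := by
        intro e he
        simp only [edg, List.map_cons, List.toFinset_cons, Finset.mem_inter, Finset.mem_insert] at he
        obtain ⟨rfl | he, hR⟩ := he
        · rw [Finset.mk_mem_sym2_iff] at hR
          simp [hR]
        · exact Finset.mem_union_right _ (Finset.mem_inter.2 ⟨he, hR⟩)
      have e3 := (Finset.card_le_card e2).trans (Finset.card_union_le _ _)
      rw [e1]
      split_ifs at e3 ⊢ <;> simp_all <;> omega

lemma choose_bound (Y : Finset (Sym2 (Fin 16))) (hY : ∀ e ∈ Y, ¬ e.IsDiag) (R : Finset (Fin 16)) :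
    (Y ∩ R.sym2) ⊆ R.offDiag.image Sym2.mk.uncurry := by
  intro e he
  rw [Finset.mem_inter] at he
  have hd := hY e he.1
  induction e with | _ a b =>
  rw [Finset.mk_mem_sym2_iff] at he
  simp at hd
  exact Finset.mem_image.2 ⟨(a, b), by simp [he.2, hd], rfl⟩

def Cert (l : CL) : Prop :=
  (∀ p ∈ l, p.2.2 ≤ 2 ∧ p.1 ≠ p.2.1) ∧ (∀ v, load l v ≤ 3) ∧
  ∀ a b, adj l a b = true → ∀ c, adj l a c = true → adj l b c = true →
    ∀ d, adj l a d = true → adj l b d = true → adj l c d = true → False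

lemma cert_nd {l : CL} (h : Cert l) : ∀ e ∈ edg l, ¬ e.IsDiag := by
  intro e he
  simp only [edg, List.mem_toFinset, List.mem_map] at he
  obtain ⟨p, hp, rfl⟩ := he
  simpa using (h.1 p hp).2

lemma cert_dens {l : CL} (h : Cert l) (R : Finset (Fin 16)) (hR : R.Nonempty) :
    36 * (edg l ∩ R.sym2).card + 42 ≤ 61 * R.card := by
  have hb := half_bound R l (fun p hp => (h.1 p hp).1)
  have hl : ∑ v ∈ R, load l v ≤ R.card * 3 := Finset.sum_le_card_nsmul _ _ _ (fun v _ => h.2.1 v)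
  have hpos := hR.card_pos
  have hsub := choose_bound (edg l) (cert_nd h) R
  have hch := Finset.card_le_card hsub
  have hcard := Sym2.card_image_offDiag R
  rw [hcard] at hch
  by_cases h6 : 6 ≤ R.card
  · omega
  by_cases h4 : R.card = 4
  · have : (edg l ∩ R.sym2).card ≤ 5 := by
      by_contra hcon
      have heq := Finset.eq_of_subset_of_card_le hsub (by
        rw [hcard, h4]; simp [Nat.choose]; omega)
      have hall : ∀ a ∈ R, ∀ b ∈ R, a ≠ b → adj l a b = true := by
        intro a ha b hb hab
        rw [← mem_edg]
        have : s(a, b) ∈ R.offDiag.image Sym2.mk.uncurry :=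
          Finset.mem_image.2 ⟨(a, b), by simp [ha, hb, hab], rfl⟩
        rw [← heq] at this
        exact (Finset.mem_inter.1 this).1
      obtain ⟨a, R', ha, rfl, h3⟩ := Finset.card_eq_succ.1 h4
      obtain ⟨b, c, d, hbc, hbd, hcd, rfl⟩ := Finset.card_eq_three.1 h3
      simp only [Finset.mem_insert, Finset.mem_singleton, not_or] at ha
      refine h.2.2 a b ?_ c ?_ ?_ d ?_ ?_ ?_ <;> apply hall <;> simp [*]
      all_goals tauto
    omega
  · have c1 : Nat.choose 1 2 = 0 := rfl
    have c2 : Nat.choose 2 2 = 1 := rfl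
    have c3 : Nat.choose 3 2 = 3 := rfl
    interval_cases hc : R.card <;> omega

def mkZ (w : Fin 6 → Fin 16) : List (Fin 16 × Fin 16) := [(w 0, w 2), (w 2, w 4), (w 4, w 0)]

def lf : Fin 6 → Fin 16 := ![2, 5, 7, 10, 12, 15]

def base : List (Fin 16 × Fin 16) :=
  [(1,0),(2,1),(3,0),(4,3),(5,4),(6,0),(7,6),(8,0),(9,8),(10,9),(11,0),(12,11),(13,0),(14,13),(15,14),
   (2,5),(5,7),(7,10),(10,12),(12,15),(15,2)]

def mkC (w : Fin 6 → Fin 16) (al : List ℕ) : CL :=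
  List.zipWith (fun p a => (p.1, p.2, a)) (base ++ mkZ w) al

instance (l : CL) : Decidable (Cert l) := by unfold Cert; infer_instance

def wj : Fin 6 → Fin 6 → Fin 16 :=
  ![![0, 1, 2, 5, 4, 3],
    ![0, 6, 7, 5, 4, 3],
    ![0, 6, 7, 10, 9, 8],
    ![0, 11, 12, 10, 9, 8],
    ![0, 11, 12, 15, 14, 13],
    ![0, 1, 2, 15, 14, 13]]

def alj : Fin 6 → List ℕ :=
  ![[1,0,1,0,1,2,1,2,1,0,2,1,2,1,0,0,0,0,1,1,2,1,2,2],
    [2,1,1,0,1,1,0,2,1,0,2,1,2,1,0,2,2,0,1,1,2,1,2,2],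
    [2,1,2,1,0,1,0,1,0,1,2,1,2,1,0,1,2,0,0,0,1,1,2,2],
    [2,1,2,1,0,2,1,1,0,1,1,0,2,1,0,1,2,2,2,0,1,1,2,2],
    [2,1,2,1,0,2,1,2,1,0,1,0,1,0,1,0,1,1,2,0,0,1,2,2],
    [1,0,2,1,0,2,1,2,1,0,2,1,1,0,1,0,1,1,2,2,2,1,2,2]]

def al0 : List ℕ := [1,0,2,1,0,1,0,2,1,0,1,0,2,1,0,1,2,1,2,1,2,2,2,2]

def XE : Finset (Sym2 (Fin 16)) := Finset.univ.image (fun j : Fin 6 => s(lf j, lf (j + 1)))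

def ZE (w : Fin 6 → Fin 16) : Finset (Sym2 (Fin 16)) := {s(w 0, w 2), s(w 2, w 4), s(w 4, w 0)}

def GoodW (w : Fin 6 → Fin 16) : Prop :=
  Function.Injective w ∧ (∀ z ∈ ZE w, z ∉ TE ∪ XE ∧ ¬ z.IsDiag) ∧ (ZE w).card = 3 ∧
  ∀ R : Finset (Fin 16), R.Nonempty → 36 * (((TE ∪ XE) ∪ ZE w) ∩ R.sym2).card + 42 ≤ 61 * R.card

set_option maxRecDepth 100000 in
lemma aux_lf : (Function.Injective lf ∧ (∀ z ∈ ZE lf, z ∉ TE ∪ XE ∧ ¬ z.IsDiag) ∧ (ZE lf).card = 3 ∧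
    ((TE ∪ XE) ∪ ZE lf) ⊆ edg (mkC lf al0)) ∧ Cert (mkC lf al0) := by
  decide +kernel

set_option maxRecDepth 100000 in
lemma aux_wj : ∀ j, (Function.Injective (wj j) ∧ (∀ z ∈ ZE (wj j), z ∉ TE ∪ XE ∧ ¬ z.IsDiag) ∧
    (ZE (wj j)).card = 3 ∧
    ((TE ∪ XE) ∪ ZE (wj j)) ⊆ edg (mkC (wj j) (alj j))) ∧ Cert (mkC (wj j) (alj j)) := by
  decide +kernel

lemma good_of {w : Fin 6 → Fin 16} {l : CL} (h : (Function.Injective w ∧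
    (∀ z ∈ ZE w, z ∉ TE ∪ XE ∧ ¬ z.IsDiag) ∧ (ZE w).card = 3 ∧
    ((TE ∪ XE) ∪ ZE w) ⊆ edg l) ∧ Cert l) : GoodW w := by
  obtain ⟨⟨h1, h2, h3, h4⟩, h5⟩ := h
  refine ⟨h1, h2, h3, fun R hR => ?_⟩
  have := cert_dens h5 R hR
  have h6 := Finset.card_le_card (Finset.inter_subset_inter h4 (Finset.Subset.refl R.sym2))
  omega

lemma good_lf : GoodW lf := good_of aux_lf

lemma good_wj (j : Fin 6) : GoodW (wj j) := good_of (aux_wj j)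

lemma wj_edges : ∀ j i : Fin 6, s(wj j i, wj j (i + 1)) ∈ TE ∨
    s(wj j i, wj j (i + 1)) = s(lf j, lf (j + 1)) := by
  decide +kernel

lemma XE_facts : (∀ z ∈ XE, z ∉ TE ∧ ¬ z.IsDiag) ∧ XE.card = 6 := by
  decide +kernel

end Bow

namespace Bow

noncomputable def pre {V : Type} (κ : Fin 16 ↪ V) (U : Finset V) : Finset (Fin 16) :=
  Finset.univ.filter (fun i => κ i ∈ U)

def Rel {V : Type} (s : St V) (κ : Fin 16 ↪ V) (Y : Finset (Sym2 (Fin 16))) : Prop :=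
  (∀ U : Finset V, ec s U ≤ (Y ∩ (pre κ U).sym2).card + (U \ Finset.univ.map κ).card) ∧
  ∀ U : Finset V, U.Nonempty → pre κ U = ∅ → ec s U + 1 ≤ U.card

lemma pre_mem {V : Type} (κ : Fin 16 ↪ V) (U : Finset V) (e : Sym2 (Fin 16)) :
    e ∈ (pre κ U).sym2 ↔ Sym2.map κ e ∈ U.sym2 := by
  induction e with | _ a b =>
  simp [pre, Finset.mk_mem_sym2_iff]

lemma card_split {V : Type} (κ : Fin 16 ↪ V) (U : Finset V) :
    U.card = (pre κ U).card + (U \ Finset.univ.map κ).card := by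
  have h1 := Finset.card_sdiff_add_card_inter U (Finset.univ.map κ)
  have h2 : U ∩ Finset.univ.map κ = (pre κ U).map κ := by
    ext v
    simp only [Finset.mem_inter, Finset.mem_map, Finset.mem_univ, true_and, pre,
      Finset.mem_filter]
    constructor
    · rintro ⟨h, i, rfl⟩; exact ⟨i, h, rfl⟩
    · rintro ⟨i, h, rfl⟩; exact ⟨h, i, rfl⟩
  rw [h2, Finset.card_map] at h1
  omega

lemma rel_tree {V : Type} (s : St V) (κ : Fin 16 ↪ V) (hs : Sparse s)
    (hT : ∀ e ∈ TE, s (Sym2.map κ e) ≠ none) : Rel s κ TE := by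
  refine ⟨fun U => ?_, fun U hU _ => ?_⟩
  · have h1 := hs (U ∪ Finset.univ.map κ) ⟨κ 0, by simp⟩
    have h2 : (U ∪ Finset.univ.map κ).card = (U \ Finset.univ.map κ).card + 16 := by
      have := Finset.card_sdiff_add_card U (Finset.univ.map κ)
      rw [Finset.card_map, Finset.card_univ, Fintype.card_fin] at this
      omega
    have hsub : (U.sym2.filter (fun e => s e ≠ none)) ∪
        (TE \ (pre κ U).sym2).image (Sym2.map κ) ⊆
        ((U ∪ Finset.univ.map κ).sym2.filter (fun e => s e ≠ none)) := by
      intro e he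
      rw [Finset.mem_filter]
      rcases Finset.mem_union.1 he with he | he
      · rw [Finset.mem_filter] at he
        exact ⟨Finset.sym2_mono Finset.subset_union_left he.1, he.2⟩
      · obtain ⟨x, hx, rfl⟩ := Finset.mem_image.1 he
        refine ⟨?_, hT x (Finset.mem_sdiff.1 hx).1⟩
        rw [Finset.mem_sym2_iff]
        intro a ha
        obtain ⟨i, _, rfl⟩ := Sym2.mem_map.1 ha
        simp
    have hdis : Disjoint (U.sym2.filter (fun e => s e ≠ none))
        ((TE \ (pre κ U).sym2).image (Sym2.map κ)) := by
      rw [Finset.disjoint_left]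
      intro e he he'
      obtain ⟨x, hx, rfl⟩ := Finset.mem_image.1 he'
      rw [Finset.mem_filter] at he
      exact (Finset.mem_sdiff.1 hx).2 ((pre_mem κ U x).2 he.1)
    have h3 := Finset.card_le_card hsub
    rw [Finset.card_union_of_disjoint hdis,
      Finset.card_image_of_injective _ (Sym2.map.injective κ.injective)] at h3
    have h4 := Finset.card_sdiff_add_card_inter TE (pre κ U).sym2
    rw [TE_card] at h4
    change ec s U + _ ≤ ec s _ at h3
    omega
  · have := hs U hU; omega

lemma rel_none {V : Type} (s : St V) (κ : Fin 16 ↪ V) (Y : Finset (Sym2 (Fin 16)))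
    (hY : ∀ e ∈ Y, ¬ e.IsDiag) (h : Rel s κ Y) (e : Sym2 (Fin 16)) (he : e ∉ Y) (hd : ¬ e.IsDiag) :
    s (Sym2.map κ e) = none := by
  induction e with | _ a b =>
  have h1 := h.1 {κ a, κ b}
  have h2 : pre κ {κ a, κ b} = {a, b} := by
    ext i; simp [pre]
  have h3 : Y ∩ ({a, b} : Finset (Fin 16)).sym2 = ∅ := by
    rw [Finset.eq_empty_iff_forall_notMem]
    intro x hx
    rw [Finset.mem_inter] at hx
    obtain ⟨hx1, hx2⟩ := hx
    have hxd := hY x hx1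
    induction x with | _ c d =>
    simp [Finset.mk_mem_sym2_iff] at hx2 hxd
    rcases hx2 with ⟨rfl | rfl, rfl | rfl⟩
    · exact hxd rfl
    · exact he hx1
    · exact he (by rwa [Sym2.eq_swap])
    · exact hxd rfl
  have h4 : ({κ a, κ b} : Finset V) \ Finset.univ.map κ = ∅ := by
    rw [Finset.sdiff_eq_empty_iff_subset]
    intro x hx
    simp at hx
    rcases hx with rfl | rfl <;> simp
  rw [h2, h3, h4] at h1
  simp only [Finset.card_empty, Nat.add_zero, Nat.le_zero, ec, Finset.card_eq_zero,
    Finset.filter_eq_empty_iff, not_not] at h1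
  exact h1 (by simp [Finset.mk_mem_sym2_iff])

lemma rel_step {V : Type} (s : St V) (κ : Fin 16 ↪ V) (Y Z : Finset (Sym2 (Fin 16)))
    (hY : ∀ e ∈ Y, ¬ e.IsDiag) (h : Rel s κ Y) (hZ : ∀ z ∈ Z, z ∉ Y ∧ ¬ z.IsDiag) :
    WinsN (fun s' => Rel s' κ (Y ∪ Z) ∧ (∀ z ∈ Z, s' (Sym2.map κ z) ≠ none) ∧
      ∀ e, e ∉ Z → s' (Sym2.map κ e) = s (Sym2.map κ e)) Z.card s := by
  have hinj : Function.Injective (Sym2.map κ) := Sym2.map.injective κ.injective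
  have := wins_present (Z.image (Sym2.map κ)) s (by
      intro e he
      obtain ⟨x, hx, rfl⟩ := Finset.mem_image.1 he
      exact rel_none s κ Y hY h x (hZ x hx).1 (hZ x hx).2) (by
      intro e he
      obtain ⟨x, hx, rfl⟩ := Finset.mem_image.1 he
      have := (hZ x hx).2
      induction x with | _ a b =>
      simpa using this)
  rw [Finset.card_image_of_injective _ hinj] at this
  refine this.mono ?_
  rintro s' ⟨q1, q2⟩
  have hsub : ∀ U : Finset V, U.sym2.filter (fun e => s' e ≠ none) ⊆
      U.sym2.filter (fun e => s e ≠ none) ∪ (Z ∩ (pre κ U).sym2).image (Sym2.map κ) := by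
    intro U e he
    rw [Finset.mem_filter] at he
    by_cases hm : e ∈ Z.image (Sym2.map κ)
    · obtain ⟨x, hx, rfl⟩ := Finset.mem_image.1 hm
      refine Finset.mem_union_right _ (Finset.mem_image_of_mem _ (Finset.mem_inter.2 ⟨hx, ?_⟩))
      exact (pre_mem κ U x).2 he.1
    · refine Finset.mem_union_left _ (Finset.mem_filter.2 ⟨he.1, ?_⟩)
      rw [← q2 e hm]; exact he.2
  refine ⟨⟨fun U => ?_, fun U hU hp => ?_⟩, ?_, ?_⟩
  · have h1 := (Finset.card_le_card (hsub U)).trans (Finset.card_union_le _ _)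
    have h2 := (Finset.card_image_le (s := Z ∩ (pre κ U).sym2) (f := Sym2.map κ))
    have h3 := h.1 U
    have h4 : ((Y ∪ Z) ∩ (pre κ U).sym2).card = (Y ∩ (pre κ U).sym2).card +
        (Z ∩ (pre κ U).sym2).card := by
      rw [Finset.union_inter_distrib_right, Finset.card_union_of_disjoint]
      rw [Finset.disjoint_left]
      intro e he he'
      exact (hZ e (Finset.mem_inter.1 he').1).1 (Finset.mem_inter.1 he).1
    change ec s' U ≤ ec s U + _ at h1
    omega
  · have h1 := (Finset.card_le_card (hsub U)).trans (Finset.card_union_le _ _)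
    have h2 := (Finset.card_image_le (s := Z ∩ (pre κ U).sym2) (f := Sym2.map κ))
    have h3 := h.2 U hU hp
    rw [hp] at h1 h2
    simp only [Finset.sym2_empty, Finset.inter_empty, Finset.card_empty, Finset.image_empty] at h1 h2
    change ec s' U ≤ ec s U + _ at h1
    omega
  · intro z hz
    exact q1 _ (Finset.mem_image_of_mem _ hz)
  · intro e he
    refine q2 _ ?_
    intro hm
    obtain ⟨x, hx, hxe⟩ := Finset.mem_image.1 hm
    rw [hinj hxe] at hx
    exact he hx

def TriC {V : Type} (c : Fin 2) (s : St V) (a : V) : Prop :=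
  ∃ b d : V, a ≠ b ∧ a ≠ d ∧ b ≠ d ∧ s s(a, b) = some c ∧ s s(a, d) = some c ∧ s s(b, d) = some c

def Dens {V : Type} (s : St V) : Prop :=
  ∀ U : Finset V, U.Nonempty → 36 * ec s U + 42 ≤ 61 * U.card

lemma rel_dens {V : Type} (s : St V) (κ : Fin 16 ↪ V) (Y : Finset (Sym2 (Fin 16)))
    (h : Rel s κ Y) (hY : ∀ R : Finset (Fin 16), R.Nonempty → 36 * (Y ∩ R.sym2).card + 42 ≤ 61 * R.card) :
    Dens s := by
  intro U hU
  rcases Finset.eq_empty_or_nonempty (pre κ U) with h0 | h0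
  · have := h.2 U hU h0
    omega
  · have h1 := h.1 U
    have h2 := hY _ h0
    have h3 := card_split κ U
    omega

lemma tri_step {V : Type} (s : St V) (κ : Fin 16 ↪ V) (h : Rel s κ (TE ∪ XE))
    (w : Fin 6 → Fin 16) (hw : GoodW w) (c : Fin 2)
    (hc : ∀ i : Fin 6, s (Sym2.map κ s(w i, w (i + 1))) = some c) :
    WinsN (fun s' : St V => Dens s' ∧ ∃ c a, TriC c s' a) 3 s := by
  obtain ⟨hinj, hz, hcard, hd⟩ := hw
  have hnd : ∀ e ∈ TE ∪ XE, ¬ e.IsDiag := by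
    intro e he
    rcases Finset.mem_union.1 he with he | he
    · exact TE_nd e he
    · exact (XE_facts.1 e he).2
  have := rel_step s κ (TE ∪ XE) (ZE w) hnd h hz
  rw [hcard] at this
  refine this.mono ?_
  rintro s' ⟨h1, h2, h3⟩
  refine ⟨rel_dens s' κ _ h1 hd, ?_⟩
  have hring : ∀ i : Fin 6, s' (Sym2.map κ s(w i, w (i + 1))) = some c := by
    intro i
    rw [h3, hc i]
    intro hm
    have h5 := hc i
    rw [rel_none s κ (TE ∪ XE) hnd h _ (hz _ hm).1 (hz _ hm).2] at h5
    exact absurd h5 (by simp)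
  have hne : ∀ i j : Fin 6, i ≠ j → κ (w i) ≠ κ (w j) := by
    intro i j hij hh
    exact hij (hinj (κ.injective hh))
  simp only [Sym2.map_mk] at hring
  by_cases hb : ∀ z ∈ ZE w, s' (Sym2.map κ z) ≠ some c
  · have hall : ∀ z ∈ ZE w, s' (Sym2.map κ z) = some (1 - c) := fun z hz =>
      fin2_eq (h2 z hz) (hb z hz)
    refine ⟨1 - c, κ (w 0), κ (w 2), κ (w 4), hne _ _ (by decide), hne _ _ (by decide),
      hne _ _ (by decide), ?_, ?_, ?_⟩
    · exact hall s(w 0, w 2) (by simp [ZE])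
    · rw [Sym2.eq_swap]; exact hall s(w 4, w 0) (by simp [ZE])
    · exact hall s(w 2, w 4) (by simp [ZE])
  · push Not at hb
    obtain ⟨z, hz, hzc⟩ := hb
    have : ∀ i : Fin 6, i + 1 ≠ i + 2 ∧ i ≠ i + 1 ∧ i ≠ i + 2 ∧ i + 1 + 1 = i + 2 := by decide
    have key : ∀ i : Fin 6, s' (Sym2.map κ s(w i, w (i + 2))) = some c → ∃ c a, TriC c s' a := by
      intro i hi
      obtain ⟨e1, e2, e3, e4⟩ := this i
      refine ⟨c, κ (w i), κ (w (i + 1)), κ (w (i + 2)), hne _ _ e2, hne _ _ e3, hne _ _ e1, hring i, hi, ?_⟩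
      have := hring (i + 1)
      rwa [e4] at this
    simp only [ZE, Finset.mem_insert, Finset.mem_singleton] at hz
    rcases hz with rfl | rfl | rfl
    · exact key 0 hzc
    · exact key 2 hzc
    · exact key 4 hzc

lemma tri_main {V : Type} (s : St V) (hs : Sparse s) (c : Fin 2) (hr : RedT 15 c s) :
    WinsN (fun s' : St V => Dens s' ∧ ∃ c a, TriC c s' a) 9 s := by
  obtain ⟨κ0, k1, k2⟩ := hr
  let κ : Fin 16 ↪ V := ⟨fun i => κ0 i.1, fun a b hab =>
    Fin.ext (k1 (by have := a.2; simp; omega) (by have := b.2; simp; omega) hab)⟩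
  have hT : ∀ e ∈ TE, s (Sym2.map κ e) = some c := by
    intro e he
    obtain ⟨k, hk, rfl⟩ := Finset.mem_image.1 he
    have hk0 := Finset.ne_of_mem_erase hk
    have : 1 ≤ k.1 := by
      rcases Nat.eq_zero_or_pos k.1 with h | h
      · exact absurd (Fin.ext h) hk0
      · exact h
    exact k2 k.1 this (by have := k.2; omega)
  have hrel := rel_tree s κ hs (fun e he => by rw [hT e he]; simp)
  have := rel_step s κ TE XE TE_nd hrel XE_facts.1
  rw [XE_facts.2] at this
  refine WinsN.bind (n := 6) (m := 3) ?_ this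
  rintro s1 ⟨r1, r2, r3⟩
  have hT1 : ∀ e ∈ TE, s1 (Sym2.map κ e) = some c := by
    intro e he
    rw [r3 e (fun hx => (XE_facts.1 e hx).1 he)]
    exact hT e he
  by_cases hb : ∃ j : Fin 6, s1 (Sym2.map κ s(lf j, lf (j + 1))) = some c
  · obtain ⟨j, hj⟩ := hb
    refine tri_step s1 κ r1 (wj j) (good_wj j) c ?_
    intro i
    rcases wj_edges j i with h | h
    · exact hT1 _ h
    · rw [h]; exact hj
  · push Not at hb
    refine tri_step s1 κ r1 lf good_lf (1 - c) ?_
    intro i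
    exact fin2_eq (r2 _ (Finset.mem_image_of_mem (fun j : Fin 6 => s(lf j, lf (j + 1))) (Finset.mem_univ i))) (hb i)

lemma forced_tri : ∃ (V : Type) (_ : Fintype V) (n : ℕ),
    WinsN (fun s : St V => Dens s ∧ ∃ c a, TriC c s a) n (fun _ => none) := by
  obtain ⟨V, hV, n, h⟩ := forced_tree
  refine ⟨V, hV, n + 9, WinsN.bind ?_ h⟩
  rintro s ⟨h1, c, h2⟩
  exact tri_main s h1 c h2

end Bow

namespace Bow

def BE : Finset (Sym2 (Fin 6)) :=
  {s(0, 1), s(0, 2), s(1, 2), s(3, 4), s(3, 5), s(4, 5), s(0, 3)}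

lemma BE_card : BE.card = 7 := by decide

lemma BE_nd : ∀ e ∈ BE, ¬ e.IsDiag := by decide

lemma BE_dens : ∀ J : Finset (Fin 6), 36 * (BE ∩ J.sym2).card ≤ 42 * J.card := by
  decide +kernel

lemma bowtie_adj {u v : Fin 6} (h : bowtie.Adj u v) : s(u, v) ∈ BE := by
  have := (SimpleGraph.fromEdgeSet_adj _).1 h
  simpa [BE] using this.1

def BowC {V : Type} (s : St V) : Prop :=
  ∃ c, ∃ f : Fin 6 ↪ V, ∀ u v, bowtie.Adj u v → s s(f u, f v) = some c

lemma pigeon (col : Fin 11 → Fin 2) : ∃ c, ∃ ι : Fin 6 ↪ Fin 11, ∀ i, col (ι i) = c := by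
  obtain ⟨c, hc⟩ := Fintype.exists_lt_card_fiber_of_mul_lt_card (n := 5) col (by simp)
  refine ⟨c, ?_⟩
  obtain ⟨t, ht, htc⟩ := Finset.exists_subset_card_eq (Nat.succ_le_of_lt hc)
  refine ⟨⟨fun i => (t.equivFinOfCardEq htc).symm i, ?_⟩, ?_⟩
  · intro a b hab
    exact (t.equivFinOfCardEq htc).symm.injective (Subtype.ext hab)
  · intro i
    have := ht ((t.equivFinOfCardEq htc).symm i).2
    exact (Finset.mem_filter.1 this).2

lemma join_bow {V : Type} (S : St (Fin 11 × V)) (c : Fin 2) (j k : Fin 11) (hjk : j ≠ k) (a a' : V)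
    (h1 : TriC c (slice S j) a) (h2 : TriC c (slice S k) a') (h : S s((j, a), (k, a')) = some c) :
    BowC S := by
  obtain ⟨b, d, h11, h12, h13, e1, e2, e3⟩ := h1
  obtain ⟨b', d', h21, h22, h23, e1', e2', e3'⟩ := h2
  simp only [slice, Sym2.map_mk] at e1 e2 e3 e1' e2' e3'
  have hinj : Function.Injective
      (![(j, a), (j, b), (j, d), (k, a'), (k, b'), (k, d')] : Fin 6 → Fin 11 × V) := by
    intro x y
    have hkj := hjk.symm
    have := h11.symm; have := h12.symm; have := h13.symm
    have := h21.symm; have := h22.symm; have := h23.symm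
    fin_cases x <;> fin_cases y <;> simp [*]
  refine ⟨c, ⟨_, hinj⟩, ?_⟩
  intro u v huv
  have hm := bowtie_adj huv
  simp only [BE, Finset.mem_insert, Finset.mem_singleton, Sym2.eq_iff] at hm
  rcases hm with (⟨rfl, rfl⟩ | ⟨rfl, rfl⟩) | (⟨rfl, rfl⟩ | ⟨rfl, rfl⟩) | (⟨rfl, rfl⟩ | ⟨rfl, rfl⟩) |
    (⟨rfl, rfl⟩ | ⟨rfl, rfl⟩) | (⟨rfl, rfl⟩ | ⟨rfl, rfl⟩) | (⟨rfl, rfl⟩ | ⟨rfl, rfl⟩) |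
    (⟨rfl, rfl⟩ | ⟨rfl, rfl⟩) <;> first | assumption | (rw [Sym2.eq_swap]; assumption)

lemma builder : ∃ (V : Type) (_ : Fintype V) (L : ℕ),
    WinsN (fun s : St V => BowC s ∧ ∀ U, 36 * ec s U ≤ 61 * U.card) L (fun _ => none) := by
  obtain ⟨V, hV, n, hW⟩ := forced_tri
  refine ⟨Fin 11 × V, inferInstance, 11 * n + 7, ?_⟩
  refine prod_step _ n hW 11 7 _ ?_
  intro S hS
  choose hD col x hx using hS
  obtain ⟨c, ι, hι⟩ := pigeon col
  have hιi : Function.Injective (Sym2.map ι) := Sym2.map.injective ι.injective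
  refine ⟨x, BE.image (Sym2.map ι), ?_, ?_, ?_⟩
  · rw [Finset.card_image_of_injective _ hιi, BE_card]
  · intro e he
    obtain ⟨y, hy, rfl⟩ := Finset.mem_image.1 he
    have := BE_nd y hy
    induction y with | _ a b =>
    simpa using this
  · intro S' hsl hpres hnone
    refine ⟨?_, ?_⟩
    · by_cases hb : ∃ y ∈ BE, S' (Sym2.map (fun j => (j, x j)) (Sym2.map ι y)) = some c
      · obtain ⟨y, hy, hyc⟩ := hb
        have hd := BE_nd y hy
        induction y with | _ a b =>
        refine join_bow S' c (ι a) (ι b) ?_ (x (ι a)) (x (ι b)) ?_ ?_ hyc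
        · intro h; exact hd (by simpa using h)
        · rw [hsl, ← hι a]; exact hx _
        · rw [hsl, ← hι b]; exact hx _
      · push Not at hb
        refine ⟨1 - c, ⟨fun i => (ι i, x (ι i)), fun a b hab => ι.injective (congrArg Prod.fst hab)⟩, ?_⟩
        intro u v huv
        exact fin2_eq (hpres _ (Finset.mem_image_of_mem _ (bowtie_adj huv))) (hb _ (bowtie_adj huv))
    · intro U
      rcases U.eq_empty_or_nonempty with rfl | hU
      · simp [ec]
      · refine prod_dens 36 61 42 0 S' x (BE.image (Sym2.map ι)) ?_ ?_ hnone U hU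
        · intro j; rw [hsl]; exact hD j
        · intro J _
          let J' : Finset (Fin 6) := Finset.univ.filter (fun i => ι i ∈ J)
          have h1 : BE.image (Sym2.map ι) ∩ J.sym2 ⊆ (BE ∩ J'.sym2).image (Sym2.map ι) := by
            intro e he
            rw [Finset.mem_inter] at he
            obtain ⟨y, hy, rfl⟩ := Finset.mem_image.1 he.1
            refine Finset.mem_image_of_mem _ (Finset.mem_inter.2 ⟨hy, ?_⟩)
            have h2 := he.2
            induction y with | _ a b =>
            simpa [J'] using h2
          have h2 := (Finset.card_le_card h1).trans Finset.card_image_le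
          have h3 := BE_dens J'
          have h4 : J'.card ≤ J.card :=
            Finset.card_le_card_of_injOn ι (fun i hi => by simpa [J'] using hi) ι.injective.injOn
          omega

end Bow

namespace Bow

lemma extract {V : Type} [hne : Nonempty V] (P : St V → Prop) : ∀ (L : ℕ) (s : St V), WinsN P L s →
    ∃ σ : List (Fin 2) → Sym2 V, ∀ γ : ℕ → Fin 2,
      (∀ i < L, ¬ (σ ((List.range i).map γ)).IsDiag) ∧
      (∀ i < L, s (σ ((List.range i).map γ)) = none) ∧
      (∀ i < L, ∀ j < L, σ ((List.range i).map γ) = σ ((List.range j).map γ) → i = j) ∧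
      ∃ s', P s' ∧ (∀ i < L, s' (σ ((List.range i).map γ)) = some (γ i)) ∧
        ∀ x, (∀ i < L, x ≠ σ ((List.range i).map γ)) → s' x = s x
  | 0, s, h => by
      have hP : P s := h
      obtain ⟨v⟩ := hne
      exact ⟨fun _ => s(v, v), fun γ => ⟨by simp, by simp, by simp, s, hP, by simp, by simp⟩⟩
  | L + 1, s, ⟨e, h1, h2, h3⟩ => by
      have ih := fun c => extract P L _ (h3 c)
      choose σ hσ using ih
      refine ⟨fun l => match l with | [] => e | c :: cs => σ c cs, fun γ => ?_⟩
      obtain ⟨a1, a2, a3, s', b1, b2, b3⟩ := hσ (γ 0) (fun i => γ (i + 1))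
      have hr : ∀ i, (List.range (i + 1)).map γ = γ 0 :: (List.range i).map (fun i => γ (i + 1)) := by
        intro i
        rw [List.range_succ_eq_map]; simp [Function.comp_def]
      have hne : ∀ i < L, σ (γ 0) ((List.range i).map (fun i => γ (i + 1))) ≠ e := by
        intro i hi h
        have := a2 i hi
        rw [h] at this
        simp at this
      refine ⟨?_, ?_, ?_, s', b1, ?_, ?_⟩
      · rintro (_ | i) hi
        · simpa using h2
        · rw [hr]; exact a1 i (by omega)
      · rintro (_ | i) hi
        · simpa using h1
        · rw [hr]
          have := a2 i (by omega)
          rwa [Function.update_of_ne (hne i (by omega))] at this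
      · rintro (_ | i) hi (_ | j) hj hij
        · rfl
        · rw [hr] at hij; exact absurd hij.symm (hne j (by omega))
        · rw [hr] at hij; exact absurd hij (hne i (by omega))
        · rw [hr, hr] at hij
          rw [a3 i (by omega) j (by omega) hij]
      · rintro (_ | i) hi
        · have := b3 e (fun i hi => (hne i hi).symm)
          simpa using this
        · rw [hr]; exact b2 i (by omega)
      · intro x hx
        rw [b3 x]
        · rw [Function.update_of_ne]
          simpa using hx 0 (by omega)
        · intro i hi
          have := hx (i + 1) (by omega)
          rwa [hr] at this

lemma strat : ∃ (V : Type) (_ : Fintype V) (L : ℕ) (σ : List (Fin 2) → Sym2 V), 0 < L ∧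
    ∀ γ : ℕ → Fin 2,
      (∀ i < L, ¬ (σ ((List.range i).map γ)).IsDiag) ∧
      (∀ U : Finset V,
        36 * ((Finset.range L).filter (fun i => σ ((List.range i).map γ) ∈ U.sym2)).card ≤ 61 * U.card) ∧
      ∃ c, ∃ f : Fin 6 ↪ V, ∀ u v, bowtie.Adj u v →
        ∃ i < L, γ i = c ∧ σ ((List.range i).map γ) = s(f u, f v) := by
  obtain ⟨V, hV, L, hW⟩ := builder
  have hVne : Nonempty V := by
    cases L with
    | zero =>
      obtain ⟨⟨c, f, hf⟩, -⟩ := hW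
      exact ⟨f 0⟩
    | succ L =>
      obtain ⟨e, -⟩ := hW
      induction e with | _ a b =>
      exact ⟨a⟩
  obtain ⟨σ, hσ⟩ := extract _ L _ hW
  have key : ∀ γ : ℕ → Fin 2,
      (∀ i < L, ¬ (σ ((List.range i).map γ)).IsDiag) ∧
      (∀ U : Finset V,
        36 * ((Finset.range L).filter (fun i => σ ((List.range i).map γ) ∈ U.sym2)).card ≤ 61 * U.card) ∧
      ∃ c, ∃ f : Fin 6 ↪ V, ∀ u v, bowtie.Adj u v →
        ∃ i < L, γ i = c ∧ σ ((List.range i).map γ) = s(f u, f v) := by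
    intro γ
    obtain ⟨h1, -, h3, s', ⟨⟨c, f, hf⟩, hd⟩, h4, h5⟩ := hσ γ
    refine ⟨h1, fun U => (Nat.mul_le_mul_left 36 ?_).trans (hd U), c, f, ?_⟩
    · refine Finset.card_le_card_of_injOn (fun i => σ ((List.range i).map γ)) ?_ ?_
      · intro i hi
        simp only [Finset.coe_filter, Finset.mem_range, Set.mem_ofPred_eq] at hi
        simp only [Finset.coe_filter, Set.mem_ofPred_eq]
        refine ⟨hi.2, ?_⟩
        rw [h4 i hi.1]; simp
      · intro i hi j hj hij
        simp only [Finset.coe_filter, Finset.mem_range, Set.mem_ofPred_eq] at hi hj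
        exact h3 i hi.1 j hj.1 hij
    · intro u v huv
      have := hf u v huv
      by_contra hcon
      push Not at hcon
      have h6 := h5 s(f u, f v) (fun i hi he => hcon i hi (by
        have := h4 i hi
        rw [← he, hf u v huv] at this
        exact (Option.some.inj this).symm) he.symm)
      rw [this] at h6
      exact absurd h6 (by simp)
  refine ⟨V, hV, L, σ, ?_, key⟩
  obtain ⟨-, -, c, f, hf⟩ := key (fun _ => 0)
  obtain ⟨i, hi, -⟩ := hf 0 1 (by simp [bowtie])
  omega

end Bow

namespace Bow

lemma count_upper {E : Type} [Fintype E] {K : ℕ} (A : Finset (Fin K → E)) (T : Finset (Fin K))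
    (h : ∀ g ∈ A, ∀ g' ∈ A, ∀ k ∈ T, (∀ j < k, g j = g' j) → g k = g' k) :
    A.card ≤ Fintype.card E ^ (K - T.card) := by
  have h1 : Fintype.card ({k // k ∈ Tᶜ} → E) = Fintype.card E ^ (K - T.card) := by
    rw [Fintype.card_fun, Fintype.card_coe, Finset.card_compl, Fintype.card_fin]
  rw [← h1, ← Finset.card_univ]
  refine Finset.card_le_card_of_injOn (fun g k => g k.1) (fun _ _ => Finset.mem_coe.2 (Finset.mem_univ _)) ?_
  intro g hg g' hg' hgg
  funext k
  have : ∀ j : ℕ, ∀ k : Fin K, k.1 = j → g k = g' k := by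
    intro j
    induction j using Nat.strong_induction_on with
    | _ j ih =>
      intro k hk
      by_cases hkT : k ∈ T
      · exact h g hg g' hg' k hkT (fun i hi => ih i.1 (by rw [← hk]; exact hi) i rfl)
      · exact congrFun hgg ⟨k, Finset.mem_compl.2 hkT⟩
  exact this k.1 k rfl

lemma count_lower {E : Type} [Fintype E] [Nonempty E] {K : ℕ} (A : Finset (Fin K → E)) (T : Finset (Fin K))
    (F : Fin K → (Fin K → E) → E)
    (hF : ∀ k ∈ T, ∀ g g' : Fin K → E, (∀ j < k, g j = g' j) → F k g = F k g')
    (hA : ∀ g, (∀ k ∈ T, g k = F k g) → g ∈ A) :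
    Fintype.card E ^ (K - T.card) ≤ A.card := by
  have h1 : Fintype.card ({k // k ∈ Tᶜ} → E) = Fintype.card E ^ (K - T.card) := by
    rw [Fintype.card_fun, Fintype.card_coe, Finset.card_compl, Fintype.card_fin]
  obtain ⟨g0⟩ : Nonempty (Fin K → E) := inferInstance
  have ex : ∀ r : {k // k ∈ Tᶜ} → E, ∃ g : Fin K → E, (∀ k ∈ T, g k = F k g) ∧
      ∀ k : {k // k ∈ Tᶜ}, g k.1 = r k := by
    intro r
    have : ∀ j : ℕ, j ≤ K → ∃ g : Fin K → E, ∀ k : Fin K, k.1 < j → (k ∈ T → g k = F k g) ∧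
        ∀ hk : k ∈ Tᶜ, g k = r ⟨k, hk⟩ := by
      intro j
      induction j with
      | zero => intro _; exact ⟨g0, fun k hk => by omega⟩
      | succ j ih =>
        intro hj
        obtain ⟨g, hg⟩ := ih (by omega)
        let k0 : Fin K := ⟨j, hj⟩
        refine ⟨Function.update g k0 (if h : k0 ∈ Tᶜ then r ⟨k0, h⟩ else F k0 g), fun k hk => ?_⟩
        have hag : ∀ i < k, g i = Function.update g k0
            (if h : k0 ∈ Tᶜ then r ⟨k0, h⟩ else F k0 g) i := by
          intro i hi
          rw [Function.update_of_ne]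
          rintro rfl
          have : k0.1 < k.1 := hi
          simp only [k0] at this
          omega
        by_cases hkk : k = k0
        · subst hkk
          simp only [Function.update_self]
          refine ⟨fun hkT => ?_, fun hkT => ?_⟩
          · exact (dif_neg (by simpa using hkT)).trans (hF _ hkT _ _ hag)
          · rw [dif_pos hkT]
        · have hkj : k.1 < j := by
            have : k.1 ≠ j := fun h => hkk (Fin.ext h)
            omega
          rw [Function.update_of_ne hkk]
          refine ⟨fun hkT => ?_, (hg k hkj).2⟩
          rw [(hg k hkj).1 hkT]
          exact hF _ hkT _ _ hag
    obtain ⟨g, hg⟩ := this K le_rfl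
    exact ⟨g, fun k hk => (hg k k.2).1 hk, fun k => (hg k k.1.2).2 k.2⟩
  choose G hG using ex
  rw [← h1, ← Finset.card_univ]
  refine Finset.card_le_card_of_injOn G (fun r _ => hA _ (hG r).1) ?_
  intro r _ r' _ hrr
  funext k
  rw [← (hG r).2 k, ← (hG r').2 k, hrr]

lemma dd_ex {E : Type} [Fintype E] (N : ℕ) (hN : N ≤ Fintype.card E) (l : List E) (hl : l.Nodup)
    (hlN : l.length ≤ N) : ∃ (f : Fin N ↪ E) (l' : List E), List.ofFn f = l ++ l' := by
  let r := (l.toFinset)ᶜ.toList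
  have hr : r.length = Fintype.card E - l.length := by
    rw [Finset.length_toList, Finset.card_compl, List.toFinset_card_of_nodup hl]
  let q := l ++ r.take (N - l.length)
  have hq : q.length = N := by
    simp only [q, List.length_append, List.length_take, hr]; omega
  have hqn : q.Nodup := by
    refine List.nodup_append'.2 ⟨hl, (Finset.nodup_toList _).sublist (List.take_sublist _ _), ?_⟩
    intro x hx hx'
    have := List.mem_of_mem_take hx'
    simp only [r, Finset.mem_toList, Finset.mem_compl, List.mem_toFinset] at this
    exact this hx
  refine ⟨⟨fun i => q.get (i.cast hq.symm), ?_⟩, r.take (N - l.length), ?_⟩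
  · intro a b hab
    have := hqn.injective_get hab
    simpa using this
  · change List.ofFn (fun i : Fin N => q.get (i.cast hq.symm)) = q
    clear_value q
    subst hq
    exact List.ofFn_get q

lemma coupling {E : Type} [Fintype E] (K N : ℕ) (hKN : K ≤ N) (hN : N ≤ Fintype.card E)
    (dd : List E → List E) (hdd : ∀ l, (dd l).Nodup) (hlen : ∀ l, (dd l).length ≤ l.length)
    (hmap : ∀ (τ : Equiv.Perm E) l, dd (l.map τ) = (dd l).map τ)
    (Succ : List E → Prop) (hS : ∀ l l', Succ l → Succ (l ++ l')) :
    (Finset.univ.filter (fun g : Fin K → E => Succ (dd (List.ofFn g)))).card *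
      Fintype.card (Fin N ↪ E) ≤
    Fintype.card E ^ K * (Finset.univ.filter (fun f : Fin N ↪ E => Succ (List.ofFn f))).card := by
  let C : List E → ℕ := fun l => (Finset.univ.filter (fun τ : Equiv.Perm E => Succ (l.map τ))).card
  have hC : ∀ f f' : Fin N ↪ E, C (List.ofFn f) = C (List.ofFn f') := by
    have key : ∀ f f' : Fin N ↪ E, C (List.ofFn f) ≤ C (List.ofFn f') := by
      intro f f'
      have hpt := Equiv.Perm.isMultiplyPretransitive E N
      obtain ⟨ρ, hρ⟩ := MulAction.exists_smul_eq (Equiv.Perm E) f' f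
      refine Finset.card_le_card_of_injOn (fun τ => τ * ρ) ?_ ?_
      · intro τ hτ
        simp only [Finset.coe_filter, Finset.mem_univ, true_and, Set.mem_ofPred_eq] at hτ ⊢
        convert hτ using 1
        rw [List.map_ofFn, List.map_ofFn, ← hρ]
        rfl
      · intro a _ b _ hab
        exact mul_right_cancel hab
    exact fun f f' => le_antisymm (key f f') (key f' f)
  obtain ⟨f0, -, -⟩ := dd_ex N hN ([] : List E) (by simp) (by simp)
  set c := C (List.ofFn f0) with hc
  have e1 : Fintype.card (Fin N ↪ E) * c = Fintype.card (Equiv.Perm E) *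
      (Finset.univ.filter (fun f : Fin N ↪ E => Succ (List.ofFn f))).card := by
    have h1 : ∑ f : Fin N ↪ E, C (List.ofFn f) = Fintype.card (Fin N ↪ E) * c := by
      rw [Finset.sum_congr rfl (fun f _ => hC f f0)]; simp [hc]
    rw [← h1]
    simp only [C, Finset.card_filter]
    rw [Finset.sum_comm, Finset.sum_congr rfl (g := fun _ =>
      ∑ f : Fin N ↪ E, if Succ (List.ofFn f) then 1 else 0)]
    · simp
    · intro τ _
      refine Fintype.sum_equiv (MulAction.toPerm τ : Equiv.Perm (Fin N ↪ E)) _ _ ?_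
      intro f
      rw [List.map_ofFn]
      rfl
  have e2 : Fintype.card (Equiv.Perm E) *
      (Finset.univ.filter (fun g : Fin K → E => Succ (dd (List.ofFn g)))).card ≤
      Fintype.card E ^ K * c := by
    have h1 : ∑ g : Fin K → E, C (dd (List.ofFn g)) ≤ Fintype.card E ^ K * c := by
      refine (Finset.sum_le_card_nsmul _ _ c ?_).trans ?_
      · intro g _
        obtain ⟨f, l', hf⟩ := dd_ex N hN (dd (List.ofFn g)) (hdd _)
          ((hlen _).trans (by simpa using hKN))
        rw [hc, hC f0 f, hf]
        refine Finset.card_le_card ?_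
        intro τ hτ
        simp only [Finset.mem_filter, Finset.mem_univ, true_and] at hτ ⊢
        rw [List.map_append]
        exact hS _ _ hτ
      · simp
    refine le_trans (le_of_eq ?_) h1
    simp only [C, Finset.card_filter]
    rw [Finset.sum_comm, Finset.sum_congr rfl (s₁ := (Finset.univ : Finset (Equiv.Perm E))) (g := fun _ =>
      ∑ g : Fin K → E, if Succ (dd (List.ofFn g)) then 1 else 0)]
    · simp
    · intro τ _
      refine Fintype.sum_equiv (Equiv.arrowCongr (Equiv.refl _) τ) _ _ ?_
      intro g
      rw [← hmap, List.map_ofFn]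
      rfl
  have hpos : 0 < Fintype.card (Equiv.Perm E) := Fintype.card_pos
  refine Nat.le_of_mul_le_mul_left ?_ hpos
  calc _ = (Fintype.card (Equiv.Perm E) * (Finset.univ.filter
        (fun g : Fin K → E => Succ (dd (List.ofFn g)))).card) * Fintype.card (Fin N ↪ E) := by ring
    _ ≤ (Fintype.card E ^ K * c) * Fintype.card (Fin N ↪ E) := Nat.mul_le_mul_right _ e2
    _ = Fintype.card E ^ K * (Fintype.card (Fin N ↪ E) * c) := by ring
    _ = _ := by rw [e1]; ring

end Bow

namespace Bow

abbrev Ed (n : ℕ) := {e : Sym2 (Fin n) // ¬ e.IsDiag}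

lemma card_Ed (n : ℕ) : Fintype.card (Ed n) = n * (n - 1) / 2 := by
  rw [Sym2.card_subtype_not_diag, Fintype.card_fin, Nat.choose_two_right]

def pos {L m : ℕ} (i : Fin L) (j : Fin m) : Fin (L * m) := finProdFinEquiv (i, j)

lemma pos_lt {L m : ℕ} {i i' : Fin L} (h : i < i') (j j' : Fin m) : pos i j < pos i' j' := by
  rw [Fin.lt_def]
  simp only [pos, finProdFinEquiv, Equiv.coe_fn_mk]
  have h1 : i.1 + 1 ≤ i'.1 := h
  have h2 := Nat.mul_le_mul_left m h1
  rw [mul_add] at h2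
  have := j.2
  omega

lemma pos_inj {L m : ℕ} {i i' : Fin L} {j j' : Fin m} (h : pos i j = pos i' j') :
    i = i' ∧ j = j' := by
  have := finProdFinEquiv.injective h
  simpa using this

def Causal {L m n : ℕ} (col : (Fin (L * m) → Ed n) → Fin (L * m) → Fin 2) : Prop :=
  ∀ k g g', (∀ j ≤ k, g j = g' j) → col g k = col g' k

noncomputable def gam {L m n : ℕ} (col : (Fin (L * m) → Ed n) → Fin (L * m) → Fin 2)
    (τ : Fin L → Fin m) (g : Fin (L * m) → Ed n) : ℕ → Fin 2 :=
  fun i => if h : i < L then col g (pos ⟨i, h⟩ (τ ⟨i, h⟩)) else 0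

noncomputable def tgt {V : Type} {L m n : ℕ} (σ : List (Fin 2) → Sym2 V)
    (col : (Fin (L * m) → Ed n) → Fin (L * m) → Fin 2)
    (τ : Fin L → Fin m) (g : Fin (L * m) → Ed n) (i : ℕ) : Sym2 V :=
  σ ((List.range i).map (gam col τ g))

def Alive {V : Type} {L m n : ℕ} (σ : List (Fin 2) → Sym2 V)
    (col : (Fin (L * m) → Ed n) → Fin (L * m) → Fin 2) (φ : V ↪ Fin n)
    (τ : Fin L → Fin m) (g : Fin (L * m) → Ed n) : Prop :=
  ∀ i : Fin L, (g (pos i (τ i))).1 = Sym2.map φ (tgt σ col τ g i.1)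

lemma tgt_congr {V : Type} {L m n : ℕ} (σ : List (Fin 2) → Sym2 V)
    (col : (Fin (L * m) → Ed n) → Fin (L * m) → Fin 2) (hcol : Causal col)
    (τ : Fin L → Fin m) (g g' : Fin (L * m) → Ed n) (i : Fin L)
    (h : ∀ j < pos i (τ i), g j = g' j) : tgt σ col τ g i.1 = tgt σ col τ g' i.1 := by
  unfold tgt
  congr 1
  refine List.map_congr_left ?_
  intro j hj
  have hji : j < i.1 := List.mem_range.1 hj
  have hjL : j < L := hji.trans i.2
  simp only [gam, hjL, dif_pos]
  refine hcol _ _ _ fun k hk => h k (hk.trans_lt (pos_lt hji _ _))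

noncomputable def TT {L m : ℕ} (τ : Fin L → Fin m) : Finset (Fin (L * m)) :=
  Finset.univ.image (fun i => pos i (τ i))

lemma TT_card {L m : ℕ} (τ : Fin L → Fin m) : (TT τ).card = L := by
  rw [TT, Finset.card_image_of_injective _ (fun a b h => (pos_inj h).1)]
  simp

lemma alive_lower {V : Type} {L m n : ℕ} [Nonempty (Ed n)] (σ : List (Fin 2) → Sym2 V)
    (hσ : ∀ γ : ℕ → Fin 2, ∀ i < L, ¬ (σ ((List.range i).map γ)).IsDiag)
    (col : (Fin (L * m) → Ed n) → Fin (L * m) → Fin 2) (hcol : Causal col) (φ : V ↪ Fin n)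
    (τ : Fin L → Fin m) :
    Fintype.card (Ed n) ^ (L * m - L) ≤
      (Finset.univ.filter (fun g => Alive σ col φ τ g)).card := by
  have hnd : ∀ g, ∀ i : Fin L, ¬ (Sym2.map φ (tgt σ col τ g i.1)).IsDiag := by
    intro g i
    have := hσ (gam col τ g) i.1 i.2
    change ¬ (tgt σ col τ g i.1).IsDiag at this
    generalize tgt σ col τ g i.1 = y at this
    induction y with | _ a b =>
    simpa using this
  have := count_lower (Finset.univ.filter (fun g => Alive σ col φ τ g)) (TT τ)
    (fun k g => ⟨Sym2.map φ (tgt σ col τ g (finProdFinEquiv.symm k).1.1), hnd g _⟩) ?_ ?_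
  · rwa [TT_card] at this
  · intro k hk g g' hgg
    obtain ⟨i, -, rfl⟩ := Finset.mem_image.1 hk
    apply Subtype.ext
    simp only [pos, Equiv.symm_apply_apply]
    rw [tgt_congr σ col hcol τ g g' i hgg]
  · intro g hg
    simp only [Finset.mem_filter, Finset.mem_univ, true_and]
    intro i
    have := hg (pos i (τ i)) (Finset.mem_image_of_mem (fun i => pos i (τ i)) (Finset.mem_univ i))
    rw [this]
    simp only [pos, Equiv.symm_apply_apply]

noncomputable def SS {L m : ℕ} (τ τ' : Fin L → Fin m) : Finset (Fin L) :=
  Finset.univ.filter (fun i => τ i = τ' i)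

noncomputable def UU {V : Type} [Fintype V] {n : ℕ} (φ : V ↪ Fin n) (φ' : V → Fin n) : Finset V :=
  Finset.univ.filter (fun v => φ' v ∈ Finset.univ.map φ)

lemma TT_union {L m : ℕ} (τ τ' : Fin L → Fin m) :
    (TT τ ∪ TT τ').card + (SS τ τ').card = 2 * L := by
  have h1 := Finset.card_union_add_card_inter (TT τ) (TT τ')
  have h2 : TT τ ∩ TT τ' = (SS τ τ').image (fun i => pos i (τ i)) := by
    ext k
    simp only [Finset.mem_inter, TT, SS, Finset.mem_image, Finset.mem_univ, true_and,
      Finset.mem_filter]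
    constructor
    · rintro ⟨⟨i, rfl⟩, j, hj⟩
      obtain ⟨rfl, h⟩ := pos_inj hj
      exact ⟨j, h.symm, rfl⟩
    · rintro ⟨i, hi, rfl⟩
      exact ⟨⟨i, rfl⟩, i, by rw [hi]⟩
  rw [h2, Finset.card_image_of_injective _ (fun a b h => (pos_inj h).1), TT_card, TT_card] at h1
  omega

lemma pair_upper {V : Type} {L m n : ℕ} (σ : List (Fin 2) → Sym2 V)
    (col : (Fin (L * m) → Ed n) → Fin (L * m) → Fin 2) (hcol : Causal col) (φ φ' : V ↪ Fin n)
    (τ τ' : Fin L → Fin m) :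
    (Finset.univ.filter (fun g => Alive σ col φ τ g ∧ Alive σ col φ' τ' g)).card *
      Fintype.card (Ed n) ^ (2 * L) ≤
      Fintype.card (Ed n) ^ (L * m) * Fintype.card (Ed n) ^ (SS τ τ').card := by
  have := count_upper (Finset.univ.filter (fun g => Alive σ col φ τ g ∧ Alive σ col φ' τ' g))
    (TT τ ∪ TT τ') ?_
  · refine (Nat.mul_le_mul_right _ this).trans (le_of_eq ?_)
    rw [← pow_add, ← pow_add]
    congr 1
    have h1 := TT_union τ τ'
    have h2 := Finset.card_le_univ (TT τ ∪ TT τ')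
    rw [Fintype.card_fin] at h2
    omega
  · intro g hg g' hg' k hk hgg
    simp only [Finset.mem_filter, Finset.mem_univ, true_and] at hg hg'
    rcases Finset.mem_union.1 hk with hk | hk
    · obtain ⟨i, -, rfl⟩ := Finset.mem_image.1 hk
      apply Subtype.ext
      rw [hg.1 i, hg'.1 i, tgt_congr σ col hcol τ g g' i hgg]
    · obtain ⟨i, -, rfl⟩ := Finset.mem_image.1 hk
      apply Subtype.ext
      rw [hg.2 i, hg'.2 i, tgt_congr σ col hcol τ' g g' i hgg]

lemma pair_dens {V : Type} [Fintype V] {L m n : ℕ} (σ : List (Fin 2) → Sym2 V)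
    (hσ : ∀ γ : ℕ → Fin 2, ∀ U : Finset V,
        36 * ((Finset.range L).filter (fun i => σ ((List.range i).map γ) ∈ U.sym2)).card ≤ 61 * U.card)
    (col : (Fin (L * m) → Ed n) → Fin (L * m) → Fin 2) (φ φ' : V ↪ Fin n)
    (τ τ' : Fin L → Fin m) (g : Fin (L * m) → Ed n) (h : Alive σ col φ τ g)
    (h' : Alive σ col φ' τ' g) :
    36 * (SS τ τ').card ≤ 61 * (UU φ φ').card := by
  refine (Nat.mul_le_mul_left 36 ?_).trans (hσ (gam col τ' g) (UU φ φ'))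
  refine Finset.card_le_card_of_injOn (fun i => i.1) ?_ (fun a _ b _ h => Fin.ext h)
  intro i hi
  have hi : τ i = τ' i := by simpa [SS] using hi
  simp only [Finset.coe_filter, Finset.mem_range, Set.mem_ofPred_eq]
  refine ⟨i.2, ?_⟩
  have h1 := h i
  rw [hi, h' i] at h1
  change tgt σ col τ' g i.1 ∈ _
  rw [Finset.mem_sym2_iff]
  intro v hv
  have h2 : φ' v ∈ Sym2.map φ' (tgt σ col τ' g i.1) := Sym2.mem_map.2 ⟨v, hv, rfl⟩
  rw [h1] at h2
  obtain ⟨w, -, hw⟩ := Sym2.mem_map.1 h2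
  simp only [UU, Finset.mem_filter, Finset.mem_univ, true_and, Finset.mem_map]
  exact ⟨w, hw⟩

end Bow

namespace Bow

lemma sum_SS {L m : ℕ} (τ : Fin L → Fin m) :
    ∑ τ' : Fin L → Fin m, (m : ℝ) ^ (SS τ τ').card ≤ (2 * m : ℝ) ^ L := by
  have h1 : ∀ τ' : Fin L → Fin m, (m : ℝ) ^ (SS τ τ').card =
      ∏ i, if τ i = τ' i then (m : ℝ) else 1 := by
    intro τ'
    rw [Finset.prod_ite]
    simp [SS]
  have h2 := Finset.prod_univ_sum (fun _ : Fin L => (Finset.univ : Finset (Fin m)))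
    (fun i j => if τ i = j then (m : ℝ) else 1)
  rw [Fintype.piFinset_univ] at h2
  rw [Finset.sum_congr rfl (fun τ' _ => h1 τ'), ← h2]
  have h3 : ∀ i ∈ (Finset.univ : Finset (Fin L)),
      ∑ j : Fin m, (if τ i = j then (m : ℝ) else 1) ≤ 2 * m := by
    intro i _
    have : ∀ j : Fin m, (if τ i = j then (m : ℝ) else 1) ≤ (if τ i = j then (m : ℝ) else 0) + 1 := by
      intro j; split_ifs <;> simp
    refine (Finset.sum_le_sum fun j _ => this j).trans (le_of_eq ?_)
    rw [Finset.sum_add_distrib]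
    simp
    ring
  refine (Finset.prod_le_prod (fun i _ => Finset.sum_nonneg fun j _ => ?_) h3).trans (by simp)
  split_ifs <;> positivity

lemma sum_UU {V : Type} [Fintype V] {n : ℕ} (φ : V ↪ Fin n) (y : ℝ) (hy : 0 ≤ y) :
    ∑ φ' : V → Fin n, y ^ (UU φ φ').card ≤ (n + Fintype.card V * y : ℝ) ^ Fintype.card V := by
  have h1 : ∀ φ' : V → Fin n, y ^ (UU φ φ').card =
      ∏ v, if φ' v ∈ Finset.univ.map φ then y else 1 := by
    intro φ'
    rw [Finset.prod_ite]
    simp [UU]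
  have h2 := Finset.prod_univ_sum (fun _ : V => (Finset.univ : Finset (Fin n)))
    (fun v j => if j ∈ Finset.univ.map φ then y else 1)
  rw [Fintype.piFinset_univ] at h2
  rw [Finset.sum_congr rfl (fun φ' _ => h1 φ'), ← h2]
  have h3 : ∀ v ∈ (Finset.univ : Finset V),
      ∑ j : Fin n, (if j ∈ Finset.univ.map φ then y else 1) ≤ n + Fintype.card V * y := by
    intro i _
    have : ∀ j : Fin n, (if j ∈ Finset.univ.map φ then y else 1) ≤
        (if j ∈ Finset.univ.map φ then y else 0) + 1 := by
      intro j; split_ifs <;> simp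
    refine (Finset.sum_le_sum fun j _ => this j).trans (le_of_eq ?_)
    rw [Finset.sum_add_distrib, ← Finset.sum_filter, Finset.sum_const]
    have h4 : (Finset.univ.filter (fun j => j ∈ Finset.univ.map φ)).card = Fintype.card V := by
      rw [Finset.filter_mem_eq_inter, Finset.univ_inter, Finset.card_map, Finset.card_univ]
    rw [h4]
    simp
    ring
  refine (Finset.prod_le_prod (fun i _ => Finset.sum_nonneg fun j _ => ?_) h3).trans (by simp)
  split_ifs <;> positivity

lemma inner_bound {V : Type} [Fintype V] {L m n : ℕ} (σ : List (Fin 2) → Sym2 V)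
    (hσ : ∀ γ : ℕ → Fin 2, ∀ U : Finset V,
        36 * ((Finset.range L).filter (fun i => σ ((List.range i).map γ) ∈ U.sym2)).card ≤ 61 * U.card)
    (col : (Fin (L * m) → Ed n) → Fin (L * m) → Fin 2) (hcol : Causal col) (φ φ' : V ↪ Fin n)
    (τ : Fin L → Fin m) (M x : ℝ) (hM : M = Fintype.card (Ed n)) (hm : 0 < m) (hmM : (m : ℝ) ≤ M)
    (hx : x = (M / m) ^ ((61 : ℝ) / 36)) :
    ∑ τ' : Fin L → Fin m,
      ((Finset.univ.filter (fun g => Alive σ col φ τ g ∧ Alive σ col φ' τ' g)).card : ℝ) * M ^ (2 * L)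
    ≤ M ^ (L * m) * (m : ℝ) ^ L * (1 + 2 ^ L * ((2 * x) ^ (UU φ φ').card - 1)) := by
  have hm' : (0 : ℝ) < m := by exact_mod_cast hm
  have hM0 : 0 < M := hm'.trans_le hmM
  have hq : 1 ≤ M / m := by rw [le_div_iff₀ hm']; linarith
  have hx1 : 1 ≤ x := by rw [hx]; exact Real.one_le_rpow hq (by norm_num)
  have hterm : ∀ τ' : Fin L → Fin m,
      ((Finset.univ.filter (fun g => Alive σ col φ τ g ∧ Alive σ col φ' τ' g)).card : ℝ) * M ^ (2 * L)
      ≤ M ^ (L * m) * (if 36 * (SS τ τ').card ≤ 61 * (UU φ φ').card then M ^ (SS τ τ').card else 0) := by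
    intro τ'
    have h1 := pair_upper σ col hcol φ φ' τ τ'
    split_ifs with h
    · rw [hM]; exact_mod_cast h1
    · have : Finset.univ.filter (fun g => Alive σ col φ τ g ∧ Alive σ col φ' τ' g) = ∅ := by
        rw [Finset.filter_eq_empty_iff]
        rintro g - ⟨q1, q2⟩
        exact h (pair_dens σ hσ col φ φ' τ τ' g q1 q2)
      rw [this]; simp
  refine (Finset.sum_le_sum fun τ' _ => hterm τ').trans ?_
  rw [← Finset.mul_sum, mul_assoc]
  refine mul_le_mul_of_nonneg_left ?_ (by positivity)
  rcases Nat.eq_zero_or_pos (UU φ φ').card with h0 | h0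
  · rw [h0]
    have : ∀ τ' : Fin L → Fin m,
        (if 36 * (SS τ τ').card ≤ 61 * 0 then M ^ (SS τ τ').card else 0) ≤ 1 := by
      intro τ'
      split_ifs with h
      · have : (SS τ τ').card = 0 := by omega
        rw [this]; simp
      · exact zero_le_one
    refine (Finset.sum_le_sum fun τ' _ => this τ').trans ?_
    simp
  · have : ∀ τ' : Fin L → Fin m,
        (if 36 * (SS τ τ').card ≤ 61 * (UU φ φ').card then M ^ (SS τ τ').card else 0) ≤
        (m : ℝ) ^ (SS τ τ').card * x ^ (UU φ φ').card := by
      intro τ'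
      split_ifs with h
      · have e1 : M = m * (M / m) := by field_simp
        have e2 : M ^ (SS τ τ').card = (m : ℝ) ^ (SS τ τ').card * (M / m) ^ (SS τ τ').card := by
          rw [← mul_pow, ← e1]
        rw [e2]
        refine mul_le_mul_of_nonneg_left ?_ (by positivity)
        rw [hx, ← Real.rpow_natCast, ← Real.rpow_natCast, ← Real.rpow_mul (by linarith)]
        refine Real.rpow_le_rpow_of_exponent_le hq ?_
        have : (36 : ℝ) * (SS τ τ').card ≤ 61 * (UU φ φ').card := by exact_mod_cast h
        linarith
      · positivity
    refine (Finset.sum_le_sum fun τ' _ => this τ').trans ?_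
    rw [← Finset.sum_mul]
    refine (mul_le_mul_of_nonneg_right (sum_SS τ) (by positivity)).trans ?_
    have h2 : (2 : ℝ) ≤ 2 ^ (UU φ φ').card := by
      calc (2 : ℝ) = 2 ^ 1 := by norm_num
        _ ≤ _ := pow_le_pow_right₀ (by norm_num) h0
    have h3 : 1 ≤ x ^ (UU φ φ').card := one_le_pow₀ hx1
    have h4 : x ^ (UU φ φ').card ≤ (2 * x) ^ (UU φ φ').card - 1 := by
      rw [mul_pow]; nlinarith
    rw [mul_pow, mul_comm ((2 : ℝ) ^ L), mul_assoc]
    refine mul_le_mul_of_nonneg_left ?_ (by positivity)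
    have h5 : (0 : ℝ) < 2 ^ L := by positivity
    nlinarith

lemma second_moment {V : Type} [Fintype V] {L m n : ℕ} (σ : List (Fin 2) → Sym2 V)
    (hnd : ∀ γ : ℕ → Fin 2, ∀ i < L, ¬ (σ ((List.range i).map γ)).IsDiag)
    (hσ : ∀ γ : ℕ → Fin 2, ∀ U : Finset V,
        36 * ((Finset.range L).filter (fun i => σ ((List.range i).map γ) ∈ U.sym2)).card ≤ 61 * U.card)
    (col : (Fin (L * m) → Ed n) → Fin (L * m) → Fin 2) (hcol : Causal col)
    (M x : ℝ) (hM : M = Fintype.card (Ed n)) (hm : 0 < m) (hmM : (m : ℝ) ≤ M)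
    (hx : x = (M / m) ^ ((61 : ℝ) / 36)) :
    (n.descFactorial (Fintype.card V) : ℝ) * M ^ (L * m) ≤
    ((Finset.univ.filter (fun g : Fin (L * m) → Ed n => ∃ φ τ, Alive σ col φ τ g)).card : ℝ) *
      ((n : ℝ) ^ Fintype.card V + 2 ^ L *
        ((n + Fintype.card V * (2 * x) : ℝ) ^ Fintype.card V - (n : ℝ) ^ Fintype.card V)) := by
  have hm' : (0 : ℝ) < m := by exact_mod_cast hm
  have hM0 : 0 < M := hm'.trans_le hmM
  have hq : 1 ≤ M / m := by rw [le_div_iff₀ hm']; linarith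
  have hx1 : 1 ≤ x := by rw [hx]; exact Real.one_le_rpow hq (by norm_num)
  have hne : Nonempty (Ed n) := by
    rw [← Fintype.card_pos_iff]
    rw [hM] at hM0
    exact_mod_cast hM0
  set a := Fintype.card V with ha
  set D : ℝ := (n : ℝ) ^ a + 2 ^ L * ((n + a * (2 * x) : ℝ) ^ a - (n : ℝ) ^ a) with hD
  have hD0 : 0 ≤ D := by
    have : (n : ℝ) ^ a ≤ (n + a * (2 * x) : ℝ) ^ a := by
      refine pow_le_pow_left₀ (by positivity) ?_ a
      have : (0 : ℝ) ≤ a * (2 * x) := by positivity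
      linarith
    have h2 : (0 : ℝ) ≤ 2 ^ L * ((n + a * (2 * x) : ℝ) ^ a - (n : ℝ) ^ a) :=
      mul_nonneg (by positivity) (by linarith)
    positivity
  let I := (V ↪ Fin n) × (Fin L → Fin m)
  let al : I → (Fin (L * m) → Ed n) → Prop := fun p g => Alive σ col p.1 p.2 g
  let G : Finset (Fin (L * m) → Ed n) := Finset.univ.filter (fun g => ∃ φ τ, Alive σ col φ τ g)
  change _ ≤ (G.card : ℝ) * D
  let W : (Fin (L * m) → Ed n) → ℝ := fun g => ∑ p : I, if al p g then 1 else 0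
  have hI : (Fintype.card I : ℝ) = (n.descFactorial a : ℝ) * (m : ℝ) ^ L := by
    simp only [I, Fintype.card_prod, Fintype.card_embedding_eq, Fintype.card_fin, Fintype.card_fun]
    push_cast
    rfl
  -- first moment
  have h1 : (Fintype.card I : ℝ) * M ^ (L * m) ≤ (∑ g, W g) * M ^ L := by
    have hLK : L ≤ L * m := Nat.le_mul_of_pos_right L hm
    have e : M ^ (L * m) = M ^ (L * m - L) * M ^ L := by
      rw [← pow_add]; congr 1; omega
    rw [e, ← mul_assoc]
    refine mul_le_mul_of_nonneg_right ?_ (by positivity)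
    simp only [W]
    rw [Finset.sum_comm]
    have : ∀ p ∈ (Finset.univ : Finset I), M ^ (L * m - L) ≤ ∑ g, if al p g then (1 : ℝ) else 0 := by
      intro p _
      rw [Finset.sum_boole, hM]
      exact_mod_cast alive_lower σ hnd col hcol p.1 p.2
    have := Finset.card_nsmul_le_sum _ _ _ this
    simpa using this
  -- second moment
  have h2 : (∑ g, W g ^ 2) * M ^ (2 * L) ≤ (Fintype.card I : ℝ) * (M ^ (L * m) * (m : ℝ) ^ L * D) := by
    have e1 : ∑ g, W g ^ 2 = ∑ p : I, ∑ φ' : V ↪ Fin n, ∑ τ' : Fin L → Fin m,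
        ((Finset.univ.filter (fun g => Alive σ col p.1 p.2 g ∧ Alive σ col φ' τ' g)).card : ℝ) := by
      have : ∀ g, W g ^ 2 = ∑ p : I, ∑ p' : I, if al p g ∧ al p' g then (1 : ℝ) else 0 := by
        intro g
        simp only [W]
        rw [sq, Finset.sum_mul_sum]
        refine Finset.sum_congr rfl fun p _ => Finset.sum_congr rfl fun p' _ => ?_
        by_cases q1 : al p g <;> by_cases q2 : al p' g <;> simp [q1, q2]
      rw [Finset.sum_congr rfl fun g _ => this g, Finset.sum_comm]
      refine Finset.sum_congr rfl fun p _ => ?_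
      rw [Finset.sum_comm, Fintype.sum_prod_type]
      refine Finset.sum_congr rfl fun φ' _ => Finset.sum_congr rfl fun τ' _ => ?_
      rw [Finset.sum_boole]
    rw [e1, Finset.sum_mul]
    have : ∀ p ∈ (Finset.univ : Finset I), (∑ φ' : V ↪ Fin n, ∑ τ' : Fin L → Fin m,
        ((Finset.univ.filter (fun g => Alive σ col p.1 p.2 g ∧ Alive σ col φ' τ' g)).card : ℝ)) * M ^ (2 * L)
        ≤ M ^ (L * m) * (m : ℝ) ^ L * D := by
      intro p _
      rw [Finset.sum_mul]
      have e2 : ∀ φ' : V ↪ Fin n, (∑ τ' : Fin L → Fin m,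
        ((Finset.univ.filter (fun g => Alive σ col p.1 p.2 g ∧ Alive σ col φ' τ' g)).card : ℝ)) * M ^ (2 * L)
        ≤ M ^ (L * m) * (m : ℝ) ^ L * (1 + 2 ^ L * ((2 * x) ^ (UU p.1 φ').card - 1)) := by
        intro φ'
        rw [Finset.sum_mul]
        exact inner_bound σ hσ col hcol p.1 φ' p.2 M x hM hm hmM hx
      refine (Finset.sum_le_sum fun φ' _ => e2 φ').trans ?_
      rw [← Finset.mul_sum]
      refine mul_le_mul_of_nonneg_left ?_ (by positivity)
      have e3 : ∑ φ' : V ↪ Fin n, (1 + 2 ^ L * ((2 * x) ^ (UU p.1 φ').card - 1)) ≤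
          ∑ φ' : V → Fin n, (1 + 2 ^ L * ((2 * x) ^ (UU p.1 φ').card - 1)) := by
        have hinj : Function.Injective (fun φ' : V ↪ Fin n => (φ' : V → Fin n)) := DFunLike.coe_injective
        rw [← Finset.sum_image (s := Finset.univ) (g := fun φ' : V ↪ Fin n => (φ' : V → Fin n))
          (f := fun φ' : V → Fin n => (1 + (2 : ℝ) ^ L * ((2 * x) ^ (UU p.1 φ').card - 1)))
          (fun a _ b _ h => hinj h)]
        refine Finset.sum_le_sum_of_subset_of_nonneg (Finset.subset_univ _) ?_
        intro φ' _ _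
        have : 1 ≤ (2 * x) ^ (UU p.1 φ').card := one_le_pow₀ (by linarith)
        have h6 : (0 : ℝ) ≤ 2 ^ L * ((2 * x) ^ (UU p.1 φ').card - 1) :=
          mul_nonneg (by positivity) (by linarith)
        linarith
      refine e3.trans ?_
      rw [Finset.sum_add_distrib, ← Finset.mul_sum, Finset.sum_sub_distrib]
      have e4 := sum_UU p.1 (2 * x) (by linarith)
      rw [← ha] at e4
      simp only [Finset.sum_const, Finset.card_univ, Fintype.card_fun, Fintype.card_fin, nsmul_eq_mul,
        mul_one]
      push_cast
      rw [← ha, hD]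
      have : (0 : ℝ) < 2 ^ L := by positivity
      nlinarith
    refine (Finset.sum_le_card_nsmul _ _ _ this).trans (le_of_eq ?_)
    simp
  -- Cauchy-Schwarz
  have h3 : (∑ g, W g) ^ 2 ≤ G.card * ∑ g, W g ^ 2 := by
    have hz : ∀ g ∉ G, W g = 0 := by
      intro g hg
      simp only [G, Finset.mem_filter, Finset.mem_univ, true_and, not_exists] at hg
      refine Finset.sum_eq_zero fun p _ => if_neg (hg p.1 p.2)
    have e : ∑ g, W g = ∑ g ∈ G, W g :=
      (Finset.sum_subset (Finset.subset_univ G) fun g _ hg => hz g hg).symm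
    rw [e]
    refine sq_sum_le_card_mul_sum_sq.trans ?_
    refine mul_le_mul_of_nonneg_left ?_ (by positivity)
    exact Finset.sum_le_sum_of_subset_of_nonneg (Finset.subset_univ _) fun g _ _ => sq_nonneg _
  rcases Nat.eq_zero_or_pos (n.descFactorial a) with h0 | h0
  · rw [h0]; simp only [Nat.cast_zero, zero_mul]; positivity
  have hd0 : (0 : ℝ) < n.descFactorial a := by exact_mod_cast h0
  rw [hI] at h1 h2
  set d : ℝ := ((n.descFactorial a : ℕ) : ℝ) with hd
  set Q := M ^ (L * m)
  have hQ : 0 < Q := by positivity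
  have hmL : (0 : ℝ) < (m : ℝ) ^ L := by positivity
  have h4 : (d * (m : ℝ) ^ L * Q) ^ 2 ≤ G.card * (d * (m : ℝ) ^ L * (Q * (m : ℝ) ^ L * D)) := by
    calc (d * (m : ℝ) ^ L * Q) ^ 2 ≤ ((∑ g, W g) * M ^ L) ^ 2 :=
          pow_le_pow_left₀ (by positivity) h1 2
      _ = (∑ g, W g) ^ 2 * M ^ (2 * L) := by ring
      _ ≤ (G.card * ∑ g, W g ^ 2) * M ^ (2 * L) := mul_le_mul_of_nonneg_right h3 (by positivity)
      _ = G.card * ((∑ g, W g ^ 2) * M ^ (2 * L)) := by ring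
      _ ≤ _ := mul_le_mul_of_nonneg_left h2 (by positivity)
  have h5 : (d * (m : ℝ) ^ L * Q * (m : ℝ) ^ L) * (d * Q) ≤
      (d * (m : ℝ) ^ L * Q * (m : ℝ) ^ L) * (G.card * D) := by
    calc _ = (d * (m : ℝ) ^ L * Q) ^ 2 := by ring
      _ ≤ _ := h4
      _ = _ := by ring
  exact le_of_mul_le_mul_left h5 (by positivity)

end Bow

namespace Bow

lemma run_append {V : Type} {r : ℕ} (π : PainterStrategy V r) (l l' : List (Sym2 V)) :
    ∀ h, runPainterAux π h (l ++ l') = runPainterAux π (runPainterAux π h l) l' := by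
  induction l with
  | nil => intro h; rfl
  | cons e l ih => intro h; exact ih _

lemma run_prefix {V : Type} {r : ℕ} (π : PainterStrategy V r) (l : List (Sym2 V)) :
    ∀ h, h <+: runPainterAux π h l := by
  induction l with
  | nil => intro h; exact List.prefix_refl _
  | cons e l ih => intro h; exact (List.prefix_append _ _).trans (ih _)

lemma run_mono {V : Type} {r : ℕ} (π : PainterStrategy V r) {l l' : List (Sym2 V)}
    (h : l <+: l') : runPainter π l <+: runPainter π l' := by
  obtain ⟨t, rfl⟩ := h
  rw [runPainter, runPainter, run_append]
  exact run_prefix _ _ _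

lemma run_mem {V : Type} {r : ℕ} (π : PainterStrategy V r) (l : List (Sym2 V)) (e : Sym2 V) :
    ∀ h, e ∈ l → ∃ c, (e, c) ∈ runPainterAux π h l := by
  induction l with
  | nil => intro h he; simp at he
  | cons e' l ih =>
    intro h he
    rcases List.mem_cons.1 he with rfl | he
    · refine ⟨π h e, (run_prefix π l _).subset ?_⟩
      simp
    · exact ih _ he

noncomputable def dd {E : Type} (l : List E) : List E := l.reverse.dedup.reverse

lemma dd_nodup {E : Type} (l : List E) : (dd l).Nodup := by
  rw [dd, List.nodup_reverse]; exact List.nodup_dedup _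

lemma dd_len {E : Type} (l : List E) : (dd l).length ≤ l.length := by
  rw [dd, List.length_reverse]
  exact (List.dedup_sublist _).length_le.trans (by simp)

lemma dd_map {E : Type} (τ : Equiv.Perm E) (l : List E) : dd (l.map τ) = (dd l).map τ := by
  rw [dd, dd, ← List.map_reverse, List.dedup_map_of_injective τ.injective, List.map_reverse]

lemma dd_mem {E : Type} (l : List E) (e : E) : e ∈ dd l ↔ e ∈ l := by
  simp [dd]

lemma dd_prefix {E : Type} (l l' : List E) : dd l <+: dd (l ++ l') := by
  rw [dd, dd, List.reverse_prefix, List.reverse_append, List.dedup_append]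
  exact List.suffix_union_right _ _

noncomputable def colr {n K : ℕ} (π : PainterStrategy (Fin n) 2) (g : Fin K → Ed n) (k : Fin K) :
    Fin 2 :=
  if ((g k).1, 0) ∈ runPainter π ((dd ((List.ofFn g).take (k.1 + 1))).map Subtype.val) then 0 else 1

lemma colr_causal {L m n : ℕ} (π : PainterStrategy (Fin n) 2) :
    Causal (L := L) (m := m) (colr π) := by
  intro k g g' h
  have h1 : (List.ofFn g).take (k.1 + 1) = (List.ofFn g').take (k.1 + 1) := by
    apply List.ext_getElem
    · simp
    · intro i h1 h2
      simp only [List.length_take, List.length_ofFn] at h1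
      simp only [List.getElem_take, List.getElem_ofFn]
      refine h _ ?_
      rw [Fin.le_def]
      simp only
      omega
  rw [colr, colr, h1, h k le_rfl]

lemma colr_mem {n K : ℕ} (π : PainterStrategy (Fin n) 2) (g : Fin K → Ed n) (k : Fin K) :
    ((g k).1, colr π g k) ∈ runPainter π ((dd (List.ofFn g)).map Subtype.val) := by
  have h1 : dd ((List.ofFn g).take (k.1 + 1)) <+: dd (List.ofFn g) := by
    conv_rhs => rw [← List.take_append_drop (k.1 + 1) (List.ofFn g)]
    exact dd_prefix _ _
  refine (run_mono π (h1.map Subtype.val)).subset ?_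
  have h2 : (g k).1 ∈ (dd ((List.ofFn g).take (k.1 + 1))).map Subtype.val := by
    refine List.mem_map.2 ⟨g k, ?_, rfl⟩
    rw [dd_mem, List.mem_take_iff_getElem]
    refine ⟨k.1, ?_, ?_⟩
    · simp
    · simp
  obtain ⟨c, hc⟩ := run_mem π _ _ [] h2
  change _ ∈ runPainter π _ at hc
  rw [colr]
  split_ifs with h0
  · exact h0
  · have : c = 1 := by
      have h3 : c ≠ 0 := by rintro rfl; exact h0 hc
      omega
    rwa [this] at hc

lemma alive_mono {V : Type} {L m n : ℕ} (σ : List (Fin 2) → Sym2 V)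
    (hσ : ∀ γ : ℕ → Fin 2, ∃ c, ∃ f : Fin 6 ↪ V, ∀ u v, bowtie.Adj u v →
        ∃ i < L, γ i = c ∧ σ ((List.range i).map γ) = s(f u, f v))
    (π : PainterStrategy (Fin n) 2) (φ : V ↪ Fin n) (τ : Fin L → Fin m) (g : Fin (L * m) → Ed n)
    (h : Alive σ (colr π) φ τ g) :
    HasMonoCopy bowtie (runPainter π ((dd (List.ofFn g)).map Subtype.val)) := by
  obtain ⟨c, f, hf⟩ := hσ (gam (colr π) τ g)
  refine ⟨c, f.trans φ, fun u v huv => ?_⟩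
  obtain ⟨i, hi, hc, he⟩ := hf u v huv
  rw [colorGraph, SimpleGraph.fromEdgeSet_adj]
  refine ⟨?_, fun hh => huv.ne ((f.trans φ).injective hh)⟩
  have h1 := h ⟨i, hi⟩
  have h2 := colr_mem π g (pos ⟨i, hi⟩ (τ ⟨i, hi⟩))
  rw [h1] at h2
  simp only [tgt] at h2
  rw [he] at h2
  simp only [gam, hi, dif_pos] at hc
  rw [hc] at h2
  exact h2

lemma mono_append {n : ℕ} (π : PainterStrategy (Fin n) 2) (l l' : List (Ed n))
    (h : HasMonoCopy bowtie (runPainter π (l.map Subtype.val))) :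
    HasMonoCopy bowtie (runPainter π ((l ++ l').map Subtype.val)) := by
  obtain ⟨c, f, hf⟩ := h
  refine ⟨c, f, fun u v huv => ?_⟩
  have := hf u v huv
  rw [colorGraph, SimpleGraph.fromEdgeSet_adj] at this ⊢
  refine ⟨(run_mono π ?_).subset this.1, this.2⟩
  rw [List.map_append]
  exact List.prefix_append _ _

lemma prob_eq (n N : ℕ) (π : PainterStrategy (Fin n) 2) :
    onlineProb n N (OnlineMonoCopy bowtie π) =
    ((Finset.univ.filter (fun f : Fin N ↪ Ed n =>
      HasMonoCopy bowtie (runPainter π ((List.ofFn f).map Subtype.val)))).card : ℝ) /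
      Fintype.card (Fin N ↪ Ed n) := by
  have key : ∀ P : (Fin N → Sym2 (Fin n)) → Prop,
      Set.ncard {f : Fin N → Sym2 (Fin n) | ValidSeqFun f ∧ P f} =
      (Finset.univ.filter (fun f : Fin N ↪ Ed n => P (fun i => (f i).1))).card := by
    intro P
    let J : (Fin N ↪ Ed n) → (Fin N → Sym2 (Fin n)) := fun f i => (f i).1
    have hJ : Function.Injective J := by
      intro f f' h
      ext i : 1
      exact Subtype.ext (congrFun h i)
    have : {f : Fin N → Sym2 (Fin n) | ValidSeqFun f ∧ P f} =
        ↑((Finset.univ.filter (fun f : Fin N ↪ Ed n => P (fun i => (f i).1))).image J) := by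
      ext f
      simp only [Set.mem_ofPred_eq, Finset.coe_image, Set.mem_image, Finset.coe_filter,
        Finset.mem_univ, true_and]
      constructor
      · rintro ⟨⟨h1, h2⟩, h3⟩
        exact ⟨⟨fun i => ⟨f i, h2 i⟩, fun a b hab => h1 (congrArg Subtype.val hab)⟩, h3, rfl⟩
      · rintro ⟨f', h3, rfl⟩
        exact ⟨⟨fun a b hab => f'.injective (Subtype.ext hab), fun i => (f' i).2⟩, h3⟩
    rw [this, Set.ncard_coe_finset, Finset.card_image_of_injective _ hJ]
  rw [onlineProb, key]
  have k2 := key (fun _ => True)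
  simp only [and_true, Finset.filter_true, Finset.card_univ] at k2
  rw [k2]
  congr 3
  refine Finset.filter_congr fun f _ => ?_
  rw [OnlineMonoCopy, List.map_ofFn]
  rfl

end Bow

namespace Bow

lemma prob_le_one (n N : ℕ) (π : PainterStrategy (Fin n) 2) :
    onlineProb n N (OnlineMonoCopy bowtie π) ≤ 1 := by
  rw [prob_eq]
  refine div_le_one_of_le₀ ?_ (by positivity)
  exact_mod_cast Finset.card_le_univ _

noncomputable def DD (a L n : ℕ) (x : ℝ) : ℝ :=
  (n : ℝ) ^ a + 2 ^ L * ((n + a * (2 * x) : ℝ) ^ a - (n : ℝ) ^ a)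

lemma prob_lower {V : Type} [Fintype V] {L n : ℕ} (σ : List (Fin 2) → Sym2 V)
    (hnd : ∀ γ : ℕ → Fin 2, ∀ i < L, ¬ (σ ((List.range i).map γ)).IsDiag)
    (hσ : ∀ γ : ℕ → Fin 2, ∀ U : Finset V,
        36 * ((Finset.range L).filter (fun i => σ ((List.range i).map γ) ∈ U.sym2)).card ≤ 61 * U.card)
    (hb : ∀ γ : ℕ → Fin 2, ∃ c, ∃ f : Fin 6 ↪ V, ∀ u v, bowtie.Adj u v →
        ∃ i < L, γ i = c ∧ σ ((List.range i).map γ) = s(f u, f v))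
    (N : ℕ) (hL : 0 < L) (hm : 0 < N / L) (hN : N ≤ Fintype.card (Ed n)) (hn : 0 < n)
    (π : PainterStrategy (Fin n) 2) :
    (n.descFactorial (Fintype.card V) : ℝ) / DD (Fintype.card V) L n
      (((Fintype.card (Ed n) : ℝ) / (N / L : ℕ)) ^ ((61 : ℝ) / 36)) ≤
      onlineProb n N (OnlineMonoCopy bowtie π) := by
  set m := N / L with hmdef
  have hKN : L * m ≤ N := Nat.mul_div_le N L
  have hmN : m ≤ N := Nat.div_le_self N L
  have hmM : (m : ℝ) ≤ (Fintype.card (Ed n) : ℝ) := by exact_mod_cast hmN.trans hN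
  set x : ℝ := ((Fintype.card (Ed n) : ℝ) / (m : ℕ)) ^ ((61 : ℝ) / 36) with hx
  have h1 := second_moment (m := m) σ hnd hσ (colr π) (colr_causal π) _ x rfl hm hmM hx
  have h2 := coupling (L * m) N hKN hN dd dd_nodup dd_len dd_map
    (fun l : List (Ed n) => HasMonoCopy bowtie (runPainter π (l.map Subtype.val)))
    (mono_append π)
  change _ ≤ _ * DD (Fintype.card V) L n x at h1
  have hx0 : 0 ≤ x := by positivity
  have hD : 0 < DD (Fintype.card V) L n x := by
    have hn' : (0 : ℝ) < n := by exact_mod_cast hn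
    have : (n : ℝ) ^ Fintype.card V ≤ (n + Fintype.card V * (2 * x) : ℝ) ^ Fintype.card V := by
      refine pow_le_pow_left₀ (by positivity) ?_ _
      have : (0 : ℝ) ≤ Fintype.card V * (2 * x) := by positivity
      linarith
    have h2 : (0 : ℝ) ≤ 2 ^ L * ((n + Fintype.card V * (2 * x) : ℝ) ^ Fintype.card V - (n : ℝ) ^ Fintype.card V) :=
      mul_nonneg (by positivity) (by linarith)
    rw [DD]
    positivity
  have hemb : 0 < Fintype.card (Fin N ↪ Ed n) := by
    rw [Fintype.card_embedding_eq, Fintype.card_fin]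
    exact Nat.descFactorial_pos.2 hN
  have hemb' : (0 : ℝ) < Fintype.card (Fin N ↪ Ed n) := by exact_mod_cast hemb
  have hM0 : (0 : ℝ) < Fintype.card (Ed n) := by
    have : 0 < Fintype.card (Ed n) := lt_of_lt_of_le hm (hmN.trans hN)
    exact_mod_cast this
  have h3 : (Finset.univ.filter (fun g : Fin (L * m) → Ed n => ∃ φ τ, Alive σ (colr π) φ τ g)).card ≤
      (Finset.univ.filter (fun g : Fin (L * m) → Ed n =>
        HasMonoCopy bowtie (runPainter π ((dd (List.ofFn g)).map Subtype.val)))).card := by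
    refine Finset.card_le_card ?_
    intro g hg
    simp only [Finset.mem_filter, Finset.mem_univ, true_and] at hg ⊢
    obtain ⟨φ, τ, h⟩ := hg
    exact alive_mono σ hb π φ τ g h
  rw [prob_eq, div_le_div_iff₀ hD hemb']
  set A := (Finset.univ.filter (fun g : Fin (L * m) → Ed n =>
        HasMonoCopy bowtie (runPainter π ((dd (List.ofFn g)).map Subtype.val)))).card
  set B := (Finset.univ.filter (fun f : Fin N ↪ Ed n =>
      HasMonoCopy bowtie (runPainter π ((List.ofFn f).map Subtype.val)))).card
  set D := DD (Fintype.card V) L n x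
  set M : ℝ := (Fintype.card (Ed n) : ℝ) with hMdef
  have h2' : (A : ℝ) * Fintype.card (Fin N ↪ Ed n) ≤ M ^ (L * m) * B := by
    rw [hMdef]; exact_mod_cast h2
  have h3' : ((Finset.univ.filter (fun g : Fin (L * m) → Ed n =>
      ∃ φ τ, Alive σ (colr π) φ τ g)).card : ℝ) ≤ A := by exact_mod_cast h3
  have hQ : 0 < M ^ (L * m) := by positivity
  refine le_of_mul_le_mul_left ?_ hQ
  calc M ^ (L * m) * ((n.descFactorial (Fintype.card V) : ℝ) * Fintype.card (Fin N ↪ Ed n))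
      = ((n.descFactorial (Fintype.card V) : ℝ) * M ^ (L * m)) * Fintype.card (Fin N ↪ Ed n) := by ring
    _ ≤ (A * D) * Fintype.card (Fin N ↪ Ed n) :=
        mul_le_mul_of_nonneg_right (h1.trans (mul_le_mul_of_nonneg_right h3' hD.le)) hemb'.le
    _ = (A * Fintype.card (Fin N ↪ Ed n)) * D := by ring
    _ ≤ (M ^ (L * m) * B) * D := mul_le_mul_of_nonneg_right h2' hD.le
    _ = _ := by ring

lemma desc_lim (a : ℕ) :
    Tendsto (fun n : ℕ => (n.descFactorial a : ℝ) / (n : ℝ) ^ a) atTop (nhds 1) := by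
  induction a with
  | zero => simp
  | succ a ih =>
    have h1 : Tendsto (fun n : ℕ => 1 - (a : ℝ) / (n : ℝ)) atTop (nhds (1 - 0)) :=
      tendsto_const_nhds.sub (tendsto_const_div_atTop_nhds_zero_nat (a : ℝ))
    have h2 := h1.mul ih
    rw [sub_zero, one_mul] at h2
    refine h2.congr' ?_
    filter_upwards [eventually_ge_atTop (a + 1)] with n hn
    rw [Nat.descFactorial_succ]
    have : (n : ℝ) ≠ 0 := by
      have : 0 < n := by omega
      positivity
    rw [Nat.cast_mul, Nat.cast_sub (by omega)]
    field_simp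
    ring

lemma DD_lim (a L : ℕ) (x : ℕ → ℝ) (hx : Tendsto (fun n => x n / n) atTop (nhds 0)) :
    Tendsto (fun n : ℕ => (n.descFactorial a : ℝ) / DD a L n (x n)) atTop (nhds 1) := by
  have h1 : Tendsto (fun n : ℕ => 1 + (2 : ℝ) ^ L * ((1 + (a * 2) * (x n / n)) ^ a - 1)) atTop
      (nhds (1 + (2 : ℝ) ^ L * ((1 + (a * 2) * 0) ^ a - 1))) :=
    tendsto_const_nhds.add (tendsto_const_nhds.mul
      (((tendsto_const_nhds.add (tendsto_const_nhds.mul hx)).pow a).sub tendsto_const_nhds))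
  have h2 := (desc_lim a).div h1 (by simp)
  simp only [mul_zero, add_zero, one_pow, sub_self, div_one] at h2
  refine h2.congr' ?_
  filter_upwards [eventually_ge_atTop 1] with n hn
  have hn0 : (0 : ℝ) < n := by exact_mod_cast hn
  have e : DD a L n (x n) = (n : ℝ) ^ a * (1 + (2 : ℝ) ^ L * ((1 + (a * 2) * (x n / n)) ^ a - 1)) := by
    have : (n + a * (2 * x n) : ℝ) = n * (1 + (a * 2) * (x n / n)) := by field_simp
    rw [DD, this, mul_pow]; ring
  simp only [Pi.div_apply]
  rw [e, div_div]

lemma x_lim (N : ℕ → ℕ) (L : ℕ) (hL : 0 < L)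
    (hN : (fun n : ℕ => (n : ℝ) ^ ((86 : ℝ) / 61)) =o[atTop] (fun n : ℕ => (N n : ℝ)))
    (hN2 : ∀ᶠ n in atTop, 2 * L ≤ N n) :
    Tendsto (fun n : ℕ => (((Fintype.card (Ed n) : ℝ) / (N n / L : ℕ)) ^ ((61 : ℝ) / 36)) / n)
      atTop (nhds 0) := by
  have h1 : Tendsto (fun n : ℕ => ((2 * L : ℝ) * ((n : ℝ) ^ ((86 : ℝ) / 61) / N n)) ^ ((61 : ℝ) / 36))
      atTop (nhds 0) := by
    have := (hN.tendsto_div_nhds_zero.const_mul (2 * L : ℝ)).rpow_const (p := (61 : ℝ) / 36)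
      (Or.inr (by norm_num))
    rw [mul_zero, Real.zero_rpow (by norm_num)] at this
    exact this
  refine squeeze_zero' (Eventually.of_forall fun n => by positivity) ?_ h1
  filter_upwards [hN2, eventually_ge_atTop 1] with n hn2 hn1
  have hn0 : (0 : ℝ) < n := by exact_mod_cast hn1
  have hL0 : (0 : ℝ) < L := by exact_mod_cast hL
  have hNpos : (0 : ℝ) < N n := by
    have : 0 < N n := by omega
    exact_mod_cast this
  have hm : (N n : ℝ) / (2 * L) ≤ ((N n / L : ℕ) : ℝ) := by
    rw [div_le_iff₀ (by positivity)]
    have h3 := Nat.div_add_mod (N n) L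
    have h4 := Nat.mod_lt (N n) hL
    have h5 : 1 ≤ N n / L := (Nat.one_le_div_iff hL).2 (by omega)
    have h6 := Nat.mul_le_mul_left L h5
    have : N n ≤ (N n / L) * (2 * L) := by nlinarith
    exact_mod_cast this
  have hM : (Fintype.card (Ed n) : ℝ) ≤ (n : ℝ) ^ (2 : ℝ) := by
    rw [card_Ed, Real.rpow_two]
    have : n * (n - 1) / 2 ≤ n ^ 2 := by
      refine (Nat.div_le_self _ _).trans ?_
      rw [sq]
      exact Nat.mul_le_mul_left n (Nat.sub_le n 1)
    exact_mod_cast this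
  have hq : (Fintype.card (Ed n) : ℝ) / (N n / L : ℕ) ≤ (2 * L : ℝ) * ((n : ℝ) ^ (2 : ℝ) / N n) := by
    calc (Fintype.card (Ed n) : ℝ) / (N n / L : ℕ) ≤ (n : ℝ) ^ (2 : ℝ) / ((N n : ℝ) / (2 * L)) :=
          div_le_div₀ (by positivity) hM (by positivity) hm
      _ = _ := by field_simp
  have e1 : (2 * L : ℝ) * ((n : ℝ) ^ (2 : ℝ) / N n) =
      ((2 * L : ℝ) * ((n : ℝ) ^ ((86 : ℝ) / 61) / N n)) * (n : ℝ) ^ ((36 : ℝ) / 61) := by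
    have : (n : ℝ) ^ (2 : ℝ) = (n : ℝ) ^ ((86 : ℝ) / 61) * (n : ℝ) ^ ((36 : ℝ) / 61) := by
      rw [← Real.rpow_add hn0]; norm_num
    rw [this]; ring
  rw [div_le_iff₀ hn0]
  refine (Real.rpow_le_rpow (by positivity) hq (by norm_num)).trans (le_of_eq ?_)
  rw [e1, Real.mul_rpow (by positivity) (by positivity), ← Real.rpow_mul hn0.le]
  norm_num

lemma N_big (N : ℕ → ℕ) (C : ℕ)
    (hN : (fun n : ℕ => (n : ℝ) ^ ((86 : ℝ) / 61)) =o[atTop] (fun n : ℕ => (N n : ℝ))) :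
    ∀ᶠ n in atTop, C ≤ N n := by
  have h1 := hN.bound (c := 1) one_pos
  have h2 : Tendsto (fun n : ℕ => (n : ℝ) ^ ((86 : ℝ) / 61)) atTop atTop :=
    (tendsto_rpow_atTop (by norm_num)).comp tendsto_natCast_atTop_atTop
  filter_upwards [h1, h2.eventually_ge_atTop (C : ℝ)] with n a b
  rw [Real.norm_of_nonneg (by positivity), Real.norm_of_nonneg (by positivity), one_mul] at a
  exact_mod_cast b.trans a

end Bow

theorem statement12 (N : ℕ → ℕ)
    (hN : (fun n : ℕ => (n : ℝ) ^ ((86 : ℝ) / 61)) =o[atTop] (fun n : ℕ => (N n : ℝ)))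
    (hNle : ∀ n : ℕ, N n ≤ n * (n - 1) / 2)
    (π : (n : ℕ) → PainterStrategy (Fin n) 2) :
    Tendsto (fun n : ℕ => onlineProb n (N n) (OnlineMonoCopy bowtie (π n)))
      atTop (nhds 1) := by
  obtain ⟨V, hV, L, σ, hL, hσ⟩ := Bow.strat
  have hbig := Bow.N_big N (2 * L) hN
  have hlim := Bow.DD_lim (Fintype.card V) L _ (Bow.x_lim N L hL hN hbig)
  refine tendsto_of_tendsto_of_tendsto_of_le_of_le' hlim tendsto_const_nhds ?_
    (Eventually.of_forall fun n => Bow.prob_le_one n (N n) (π n))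
  filter_upwards [hbig, eventually_ge_atTop 1] with n hn hn1
  exact Bow.prob_lower σ (fun γ => (hσ γ).1) (fun γ => (hσ γ).2.1) (fun γ => (hσ γ).2.2) (N n) hL
    (Nat.div_pos (by omega) hL) (by rw [Bow.card_Ed]; exact hNle n) hn1 (π n)
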